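/- arXiv:1712.05279 — 7 statements merged into one kernel-verified Lean document; each statement's English description precedes it below -/
import Mathlib

section
/- Let (X,𝒜) be a measurable space and H the RKHS of a bounded measurable kernel k on X such that the kernel embedding Φ : ℳ(X) → H is injective. Then the following statements are equivalent: (i) the vector space ℳ(X) is finite dimensional; (ii) the norms ‖·‖_H and ‖·‖_TV on ℳ(X) are equivalent; (iii) the norm ‖·‖_H on ℳ(X) is complete; (iv) the kernel embedding Φ : ℳ(X) → H is surjective. -/
/-!
The embedding `Φ` is linear, bounded for the total variation norm, and has dense range because
`Φ δ_x = φ x`. `H` is automatically complete (`complete_of_injective`), so completeness of `‖·‖_H`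
is the same as closedness of the range, that is, surjectivity of `Φ`; and if `ℳ(X)` is finite
dimensional then the range is closed.

If `Φ` is bijective, the open mapping theorem yields the lower bound `c ‖μ‖_TV ≤ ‖Φ μ‖`. This uses
completeness of the total variation norm (`tv_complete`): absolutely convergent series of signed
measures can be summed setwise.

Finally, a lower bound forces finite dimension, because total variation on signed sums of Dirac
masses is an `ℓ¹` norm, while `‖·‖_H` is Hilbertian. For `n` points in distinct atoms of the
σ-algebra, `‖∑ ± δ_{x_i}‖_TV = n` for all signs, but for some signs `‖∑ ± φ x_i‖ ≤ C √n`
(`exists_signs`). Hence there are finitely many atoms (`finite_atoms`), so finitely many measurable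
sets, and `ℳ(X)` is finite dimensional (`finiteDimensional_of_finite_atoms`).
-/

open MeasureTheory Filter
open scoped InnerProductSpace

noncomputable section

/-- Kernel mean embedding of a finite signed measure via the canonical feature map. -/
def embed {X : Type*} [MeasurableSpace X] {H : Type*} [NormedAddCommGroup H]
    [NormedSpace ℝ H] (φ : X → H) (μ : SignedMeasure X) : H :=
  (∫ x, φ x ∂μ.toJordanDecomposition.posPart) - ∫ x, φ x ∂μ.toJordanDecomposition.negPart

/-- Total variation norm of a finite signed measure. -/
def tvNorm {X : Type*} [MeasurableSpace X] (μ : SignedMeasure X) : ℝ :=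
  (μ.totalVariation Set.univ).toReal

/-! ### Total variation as a complete norm -/

section TotalVariation

variable {X : Type*} [MeasurableSpace X]

/-- The total variation norm is attained on a Hahn set. -/
lemma exists_tvNorm_eq (μ : SignedMeasure X) :
    ∃ A, MeasurableSet A ∧ tvNorm μ = μ A - μ Aᶜ := by
  obtain ⟨S, hS, -, -, hp, hn⟩ := μ.toJordanDecomposition.exists_compl_positive_negative
  refine ⟨Sᶜ, hS.compl, ?_⟩
  rw [compl_compl, μ.apply_eq_posPart_real_sub_negPart_real hS,
    μ.apply_eq_posPart_real_sub_negPart_real hS.compl]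
  have h1 := measureReal_add_measureReal_compl (μ := μ.toJordanDecomposition.posPart) hS
  have h2 := measureReal_add_measureReal_compl (μ := μ.toJordanDecomposition.negPart) hS
  have h3 : μ.toJordanDecomposition.posPart.real S = 0 := by simp [measureReal_def, hp]
  have h4 : μ.toJordanDecomposition.negPart.real Sᶜ = 0 := by simp [measureReal_def, hn]
  have h5 : tvNorm μ = μ.toJordanDecomposition.posPart.real Set.univ
      + μ.toJordanDecomposition.negPart.real Set.univ := by
    change μ.totalVariation.real Set.univ = _
    rw [SignedMeasure.totalVariation, measureReal_add_apply]
  linarith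

lemma abs_apply_le (μ : SignedMeasure X) {A : Set X} (hA : MeasurableSet A) :
    |μ A| ≤ μ.totalVariation.real A := by
  rw [μ.apply_eq_posPart_real_sub_negPart_real hA, SignedMeasure.totalVariation,
    measureReal_add_apply]
  have h1 : 0 ≤ μ.toJordanDecomposition.posPart.real A := measureReal_nonneg
  have h2 : 0 ≤ μ.toJordanDecomposition.negPart.real A := measureReal_nonneg
  rw [abs_le]; constructor <;> linarith

lemma abs_apply_le_tvNorm (μ : SignedMeasure X) {A : Set X} (hA : MeasurableSet A) :
    |μ A| ≤ tvNorm μ :=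
  (abs_apply_le μ hA).trans (measureReal_mono (Set.subset_univ A))

lemma sub_compl_le_tvNorm (μ : SignedMeasure X) {A : Set X} (hA : MeasurableSet A) :
    μ A - μ Aᶜ ≤ tvNorm μ := by
  have h := measureReal_add_measureReal_compl (μ := μ.totalVariation) hA
  have h1 := abs_le.1 (abs_apply_le μ hA)
  have h2 := abs_le.1 (abs_apply_le μ hA.compl)
  change _ ≤ μ.totalVariation.real Set.univ
  linarith

lemma tvNorm_core : letI : Norm (SignedMeasure X) := ⟨tvNorm⟩
    NormedSpace.Core ℝ (SignedMeasure X) := by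
  let _ : Norm (SignedMeasure X) := ⟨tvNorm⟩
  have hsmul : ∀ (c : ℝ) (μ : SignedMeasure X), tvNorm (c • μ) ≤ |c| * tvNorm μ := by
    intro c μ
    obtain ⟨A, hA, h⟩ := exists_tvNorm_eq (c • μ)
    have h1 := sub_compl_le_tvNorm μ hA
    have h2 := sub_compl_le_tvNorm μ hA.compl
    rw [compl_compl] at h2
    rw [h]
    have : (c • μ) A - (c • μ) Aᶜ = c * (μ A - μ Aᶜ) := by simp; ring
    rw [this]
    calc c * (μ A - μ Aᶜ) ≤ |c * (μ A - μ Aᶜ)| := le_abs_self _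
      _ = |c| * |μ A - μ Aᶜ| := abs_mul _ _
      _ ≤ _ := by
        gcongr
        rw [abs_le]; constructor <;> linarith
  refine { norm_nonneg := fun μ => ENNReal.toReal_nonneg, norm_smul := ?_, norm_triangle := ?_,
           norm_eq_zero_iff := ?_ }
  · intro c μ
    change tvNorm _ = |c| * tvNorm _
    refine le_antisymm (hsmul c μ) ?_
    rcases eq_or_ne c 0 with rfl | hc
    · simp [tvNorm]
    · have := hsmul c⁻¹ (c • μ)
      rw [inv_smul_smul₀ hc, abs_inv] at this
      have h := abs_pos.2 hc
      calc |c| * tvNorm μ ≤ |c| * (|c|⁻¹ * tvNorm (c • μ)) := by gcongr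
        _ = _ := by field_simp
  · intro μ ν
    change tvNorm _ ≤ tvNorm _ + tvNorm _
    obtain ⟨A, hA, h⟩ := exists_tvNorm_eq (μ + ν)
    have h1 := sub_compl_le_tvNorm μ hA
    have h2 := sub_compl_le_tvNorm ν hA
    rw [h]
    simp only [add_apply]
    linarith
  · intro μ
    change tvNorm _ = 0 ↔ _
    constructor
    · intro h
      ext A hA
      have := abs_apply_le_tvNorm μ hA
      rw [h] at this
      simpa using this
    · rintro rfl
      simp [tvNorm, SignedMeasure.totalVariation_zero]

/-- The total variation norm on finite signed measures, as a normed group. It is kept out of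
the global instances so that `SignedMeasure X` carries only its algebraic structure. -/
@[reducible] def tvGroup : NormedAddCommGroup (SignedMeasure X) :=
  letI : Norm (SignedMeasure X) := ⟨tvNorm⟩
  NormedAddCommGroup.ofCore tvNorm_core

/-- The normed space structure belonging to `tvGroup`. -/
@[reducible] def tvSpace : letI := tvGroup (X := X); NormedSpace ℝ (SignedMeasure X) :=
  letI := tvGroup (X := X)
  NormedSpace.ofCore (tvNorm_core (X := X))

/-- The setwise sum of a series of signed measures that converges absolutely in total variation:
countable additivity is an interchange of absolutely convergent double sums. -/
lemma exists_series_limit (u : ℕ → SignedMeasure X) (hu : Summable fun n => tvNorm (u n)) :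
    ∃ s : SignedMeasure X, ∀ A, MeasurableSet A → HasSum (fun n => u n A) (s A) := by
  have hsum : ∀ A, Summable fun n => u n A := by
    intro A
    by_cases hA : MeasurableSet A
    · exact Summable.of_norm_bounded hu fun n => abs_apply_le_tvNorm (u n) hA
    · simp [(u _).not_measurable hA]
  refine ⟨⟨fun A => ∑' n, u n A, by simp, fun A hA => by simp [(u _).not_measurable hA], ?_⟩,
    fun A _ => (hsum A).hasSum⟩
  intro f hf hd
  have hb : ∀ n, Summable (fun i => |u n (f i)|) ∧ ∑' i, |u n (f i)| ≤ tvNorm (u n) := by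
    intro n
    have hle : ∀ F : Finset ℕ, ∑ i ∈ F, |u n (f i)| ≤ tvNorm (u n) := by
      intro F
      calc ∑ i ∈ F, |u n (f i)| ≤ ∑ i ∈ F, (u n).totalVariation.real (f i) :=
            Finset.sum_le_sum fun i _ => abs_apply_le _ (hf i)
        _ = (u n).totalVariation.real (⋃ i ∈ F, f i) :=
            (measureReal_biUnion_finset (fun i _ j _ h => hd h) (fun i _ => hf i)).symm
        _ ≤ _ := measureReal_mono (Set.subset_univ _)
    exact ⟨summable_of_sum_le (fun _ => abs_nonneg _) hle,
      Real.tsum_le_of_sum_le (fun _ => abs_nonneg _) hle⟩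
  have hprod : Summable fun p : ℕ × ℕ => u p.1 (f p.2) := by
    refine Summable.of_norm ?_
    refine (summable_prod_of_nonneg (fun _ => norm_nonneg _)).2 ⟨fun n => (hb n).1, ?_⟩
    exact Summable.of_nonneg_of_le (fun n => tsum_nonneg fun _ => norm_nonneg _)
      (fun n => (hb n).2) hu
  have h1 : HasSum (fun n => u n (⋃ i, f i)) (∑' p : ℕ × ℕ, u p.1 (f p.2)) :=
    hprod.hasSum.prod_fiberwise fun n => (u n).m_iUnion hf hd
  have h2 : HasSum (fun i => ∑' n, u n (f i)) (∑' p : ℕ × ℕ, u p.1 (f p.2)) := by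
    have h3 : HasSum (fun p : ℕ × ℕ => u p.2 (f p.1)) (∑' p : ℕ × ℕ, u p.1 (f p.2)) :=
      (Equiv.prodComm ℕ ℕ).hasSum_iff.2 hprod.hasSum
    exact h3.prod_fiberwise fun i => (hsum (f i)).hasSum
  rwa [h1.tsum_eq]

lemma tv_complete : letI := tvGroup (X := X); CompleteSpace (SignedMeasure X) := by
  let _ := tvGroup (X := X)
  refine NormedAddCommGroup.completeSpace_of_summable_imp_tendsto fun u hu => ?_
  have hu' : Summable fun n => tvNorm (u n) := hu
  obtain ⟨s, hs⟩ := exists_series_limit u hu'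
  refine ⟨s, tendsto_iff_norm_sub_tendsto_zero.2 ?_⟩
  refine squeeze_zero (fun _ => norm_nonneg _) (fun N => ?_)
    (tendsto_sum_nat_add fun n => tvNorm (u n))
  rw [norm_sub_rev]
  change tvNorm (s - ∑ i ∈ Finset.range N, u i) ≤ _
  obtain ⟨A, hA, h⟩ := exists_tvNorm_eq (s - ∑ i ∈ Finset.range N, u i)
  have key : ∀ B, MeasurableSet B → HasSum (fun n => u (n + N) B)
      ((s - ∑ i ∈ Finset.range N, u i) B) := by
    intro B hB
    have := (hasSum_nat_add_iff' N).2 (hs B hB)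
    simpa using this
  rw [h]
  exact hasSum_le (fun n => sub_compl_le_tvNorm (u (n + N)) hA)
    ((key A hA).sub (key Aᶜ hA.compl)) ((summable_nat_add_iff N).2 hu').hasSum

end TotalVariation

/-! ### Linearity and boundedness of the embedding -/

section Embedding

variable {X : Type*} [MeasurableSpace X] {H : Type*} [NormedAddCommGroup H]
  [NormedSpace ℝ H]

/-- The embedding may be computed from any representation of `μ` as a difference of finite
measures, not only the Jordan decomposition. -/
lemma embed_eq {φ : X → H} (hint : ∀ (m : Measure X) [IsFiniteMeasure m], Integrable φ m)
    (μ : SignedMeasure X) (p q : Measure X) [IsFiniteMeasure p] [IsFiniteMeasure q]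
    (h : μ = p.toSignedMeasure - q.toSignedMeasure) :
    embed φ μ = (∫ x, φ x ∂p) - ∫ x, φ x ∂q := by
  have hj := μ.toSignedMeasure_toJordanDecomposition
  rw [JordanDecomposition.toSignedMeasure] at hj
  have h1 : (μ.toJordanDecomposition.posPart + q).toSignedMeasure
      = (p + μ.toJordanDecomposition.negPart).toSignedMeasure := by
    rw [Measure.toSignedMeasure_add, Measure.toSignedMeasure_add]
    rw [← sub_eq_sub_iff_add_eq_add, hj, h]
  rw [Measure.toSignedMeasure_eq_toSignedMeasure_iff] at h1
  have h2 := congrArg (fun m => ∫ x, φ x ∂m) h1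
  simp only [integral_add_measure (hint _) (hint _)] at h2
  rw [embed, sub_eq_sub_iff_add_eq_add, h2]

lemma embed_add {φ : X → H} (hint : ∀ (m : Measure X) [IsFiniteMeasure m], Integrable φ m)
    (μ ν : SignedMeasure X) : embed φ (μ + ν) = embed φ μ + embed φ ν := by
  rw [embed_eq hint (μ + ν)
    (μ.toJordanDecomposition.posPart + ν.toJordanDecomposition.posPart)
    (μ.toJordanDecomposition.negPart + ν.toJordanDecomposition.negPart)]
  · simp only [integral_add_measure (hint _) (hint _), embed]
    abel
  · have h1 := μ.toSignedMeasure_toJordanDecomposition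
    have h2 := ν.toSignedMeasure_toJordanDecomposition
    rw [JordanDecomposition.toSignedMeasure] at h1 h2
    rw [Measure.toSignedMeasure_add, Measure.toSignedMeasure_add]
    nth_rewrite 1 [← h1, ← h2]
    abel

lemma norm_embed_le {φ : X → H} {C : ℝ} (hC : ∀ x, ‖φ x‖ ≤ C) (μ : SignedMeasure X) :
    ‖embed φ μ‖ ≤ C * tvNorm μ := by
  have h5 : tvNorm μ = μ.toJordanDecomposition.posPart.real Set.univ
      + μ.toJordanDecomposition.negPart.real Set.univ := by
    change μ.totalVariation.real Set.univ = _
    rw [SignedMeasure.totalVariation, measureReal_add_apply]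
  rw [embed, h5, mul_add]
  refine (norm_sub_le _ _).trans ?_
  gcongr
  · exact norm_integral_le_of_norm_le_const (Eventually.of_forall hC)
  · exact norm_integral_le_of_norm_le_const (Eventually.of_forall hC)

/-- The kernel mean embedding as a bounded linear map for the total variation norm. -/
def embedL {φ : X → H} (hint : ∀ (m : Measure X) [IsFiniteMeasure m], Integrable φ m)
    {C : ℝ} (hC : ∀ x, ‖φ x‖ ≤ C) :
    letI := tvGroup (X := X); letI := tvSpace (X := X); SignedMeasure X →L[ℝ] H :=
  letI := tvGroup (X := X)
  letI := tvSpace (X := X)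
  let f : SignedMeasure X →+ H := AddMonoidHom.mk' (embed φ) (embed_add hint)
  f.toRealLinearMap (AddMonoidHomClass.continuous_of_bound f C (norm_embed_le hC))

/-- The kernel mean embedding as a linear map, free of any topology on `SignedMeasure X`. -/
def embedLin {φ : X → H} (hint : ∀ (m : Measure X) [IsFiniteMeasure m], Integrable φ m)
    {C : ℝ} (hC : ∀ x, ‖φ x‖ ≤ C) : SignedMeasure X →ₗ[ℝ] H :=
  letI := tvGroup (X := X)
  letI := tvSpace (X := X)
  (embedL hint hC).toLinearMap

lemma embedLin_apply {φ : X → H} (hint : ∀ (m : Measure X) [IsFiniteMeasure m], Integrable φ m)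
    {C : ℝ} (hC : ∀ x, ‖φ x‖ ≤ C) (μ : SignedMeasure X) : embedLin hint hC μ = embed φ μ := rfl

lemma embed_dirac {φ : X → H} (hφ : StronglyMeasurable φ) [CompleteSpace H]
    (hint : ∀ (m : Measure X) [IsFiniteMeasure m], Integrable φ m) (x : X) :
    embed φ (Measure.dirac x).toSignedMeasure = φ x := by
  rw [embed_eq hint _ (Measure.dirac x) 0 (by simp [Measure.toSignedMeasure_zero])]
  simp [integral_dirac' _ _ hφ]

/-- Banach's inverse mapping theorem applied to the embedding. -/
lemma lower_bound_of_surjective [CompleteSpace H] {φ : X → H}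
    (hint : ∀ (m : Measure X) [IsFiniteMeasure m], Integrable φ m)
    {C : ℝ} (hC : ∀ x, ‖φ x‖ ≤ C) (hinj : Function.Injective (embed φ))
    (hsurj : Function.Surjective (embed φ)) :
    ∃ c : ℝ, 0 < c ∧ ∀ μ : SignedMeasure X, c * tvNorm μ ≤ ‖embed φ μ‖ := by
  let _ := tvGroup (X := X)
  let _ := tvSpace (X := X)
  have := tv_complete (X := X)
  obtain ⟨K, hK, h⟩ := (embedL hint hC).exists_preimage_norm_le hsurj
  refine ⟨K⁻¹, inv_pos.2 hK, fun μ => ?_⟩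
  obtain ⟨ν, hν, hle⟩ := h (embed φ μ)
  have hνμ : ν = μ := hinj hν
  subst hνμ
  rw [inv_mul_le_iff₀ hK]
  exact hle

end Embedding

/-! ### Atoms of the σ-algebra -/

section Atoms

variable {X : Type*} [MeasurableSpace X]

/-- Two points are equivalent when no measurable set separates them; the classes are the
measurable atoms of the σ-algebra. -/
def atomSetoid (X : Type*) [MeasurableSpace X] : Setoid X where
  r x y := ∀ A, MeasurableSet A → (x ∈ A ↔ y ∈ A)
  iseqv := ⟨fun _ _ _ => Iff.rfl, fun h A hA => (h A hA).symm,
    fun h h' A hA => (h A hA).trans (h' A hA)⟩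

/-- With finitely many atoms there are finitely many measurable sets, and a signed measure is
determined by its values on them. -/
lemma finiteDimensional_of_finite_atoms [Finite (Quotient (atomSetoid X))] :
    FiniteDimensional ℝ (SignedMeasure X) := by
  have hfin : Finite {A : Set X // MeasurableSet A} := by
    refine Finite.of_injective
      (fun A => (Quotient.mk (atomSetoid X) '' A.1 : Set (Quotient (atomSetoid X)))) ?_
    have key : ∀ A B : {A : Set X // MeasurableSet A},
        Quotient.mk (atomSetoid X) '' A.1 = Quotient.mk (atomSetoid X) '' B.1 → A.1 ⊆ B.1 := by
      intro A B h x hx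
      have : Quotient.mk (atomSetoid X) x ∈ Quotient.mk (atomSetoid X) '' B.1 :=
        h ▸ Set.mem_image_of_mem _ hx
      obtain ⟨y, hy, hyx⟩ := this
      exact (Quotient.exact hyx B.1 B.2).1 hy
    intro A B h
    exact Subtype.ext ((key A B h).antisymm (key B A h.symm))
  let T : SignedMeasure X →ₗ[ℝ] ({A : Set X // MeasurableSet A} → ℝ) :=
    { toFun := fun μ A => μ A.1
      map_add' := fun μ ν => by ext; simp
      map_smul' := fun c μ => by ext; simp }
  refine FiniteDimensional.of_injective T fun μ ν h => ?_
  ext A hA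
  exact congrFun h ⟨A, hA⟩

/-- A measurable set containing the chosen representatives of the atoms in `S` and missing those
of the atoms in `T`. -/
lemma exists_separating (S T : Finset (Quotient (atomSetoid X))) (hd : Disjoint S T) :
    ∃ A, MeasurableSet A ∧ (∀ q ∈ S, q.out ∈ A) ∧ ∀ q ∈ T, q.out ∉ A := by
  have h : ∀ p q : Quotient (atomSetoid X), p ≠ q →
      ∃ A, MeasurableSet A ∧ p.out ∈ A ∧ q.out ∉ A := by
    intro p q hpq
    by_contra! hcon
    refine hpq (Quotient.out_equiv_out.1 fun A hA => ⟨hcon A hA, fun hq => ?_⟩)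
    by_contra hp
    exact hcon Aᶜ hA.compl hp hq
  choose! A hA hp hq using h
  have hne : ∀ p ∈ S, ∀ q ∈ T, p ≠ q := fun p hp q hq => Finset.disjoint_left.1 hd hp |>
    fun h e => h (e ▸ hq)
  refine ⟨⋃ p ∈ S, ⋂ q ∈ T, A p q, ?_, ?_, ?_⟩
  · exact S.measurableSet_biUnion fun p hpS => T.measurableSet_biInter fun q hqT =>
      hA p q (hne p hpS q hqT)
  · intro p hpS
    simp only [Set.mem_iUnion, Set.mem_iInter]
    exact ⟨p, hpS, fun q hqT => hp p q (hne p hpS q hqT)⟩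
  · intro q hqT hmem
    simp only [Set.mem_iUnion, Set.mem_iInter] at hmem
    obtain ⟨p, hpS, h⟩ := hmem
    exact hq p q (hne p hpS q hqT) (h q hqT)

end Atoms

/-! ### Choice of signs and the number of atoms -/

/-- Some choice of signs makes a sum of vectors in an inner product space at most as long as if
the vectors were orthogonal. -/
lemma exists_signs {ι : Type*} {H : Type*} [NormedAddCommGroup H] [InnerProductSpace ℝ H]
    (v : ι → H) (F : Finset ι) :
    ∃ e : ι → ℝ, (∀ i, e i = 1 ∨ e i = -1) ∧
      ‖∑ i ∈ F, e i • v i‖ ^ 2 ≤ ∑ i ∈ F, ‖v i‖ ^ 2 := by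
  classical
  induction F using Finset.induction_on with
  | empty => exact ⟨fun _ => 1, fun _ => Or.inl rfl, by simp⟩
  | insert j F hj ih =>
    obtain ⟨e, he, hle⟩ := ih
    set a := ∑ i ∈ F, e i • v i with ha
    have hsum : ∀ t : ℝ, ∑ i ∈ insert j F, Function.update e j t i • v i = t • v j + a := by
      intro t
      rw [Finset.sum_insert hj, Function.update_self, ha]
      congr 1
      exact Finset.sum_congr rfl fun i hi => by
        rw [Function.update_of_ne (show i ≠ j from fun h => hj (h ▸ hi))]
    have hsgn : ∀ t : ℝ, (t = 1 ∨ t = -1) → ∀ i, Function.update e j t i = 1 ∨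
        Function.update e j t i = -1 := by
      intro t ht i
      by_cases hi : i = j
      · subst hi; simpa using ht
      · simpa [Function.update_of_ne hi] using he i
    have hpar := parallelogram_law_with_norm ℝ a (v j)
    rw [Finset.sum_insert hj]
    -- By the parallelogram law, one of `a ± v j` has square norm at most `‖a‖² + ‖v j‖²`.
    rcases le_total ‖a + v j‖ ‖a - v j‖ with h | h
    · refine ⟨Function.update e j 1, hsgn 1 (Or.inl rfl), ?_⟩
      rw [hsum, one_smul, add_comm (v j) a]
      nlinarith [norm_nonneg (a + v j)]
    · refine ⟨Function.update e j (-1), hsgn (-1) (Or.inr rfl), ?_⟩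
      rw [hsum, neg_one_smul, neg_add_eq_sub]
      nlinarith [norm_nonneg (a - v j)]

/-- Signed sums of `n` Dirac measures at points of distinct atoms have total variation at least
`n`, while for suitable signs their embedding has norm `O(√n)`; so a lower bound on the embedding
limits the number of atoms. -/
lemma finite_atoms {X : Type*} [MeasurableSpace X]
    {H : Type*} [NormedAddCommGroup H] [InnerProductSpace ℝ H] [CompleteSpace H] {φ : X → H}
    (hφ : StronglyMeasurable φ)
    (hint : ∀ (m : Measure X) [IsFiniteMeasure m], Integrable φ m)
    {C : ℝ} (hC : ∀ x, ‖φ x‖ ≤ C) {c : ℝ} (hc : 0 < c)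
    (hlow : ∀ μ : SignedMeasure X, c * tvNorm μ ≤ ‖embed φ μ‖) :
    Finite (Quotient (atomSetoid X)) := by
  classical
  by_contra hcon
  rw [not_finite_iff_infinite] at hcon
  obtain ⟨n, hn⟩ := exists_nat_gt (C ^ 2 / c ^ 2)
  obtain ⟨F, hF⟩ := Infinite.exists_subset_card_eq (Quotient (atomSetoid X)) n
  obtain ⟨e, he, hle⟩ := exists_signs (fun q : Quotient (atomSetoid X) => φ q.out) F
  set μ : SignedMeasure X := ∑ q ∈ F, e q • (Measure.dirac q.out).toSignedMeasure with hμ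
  have hemb : embed φ μ = ∑ q ∈ F, e q • φ q.out := by
    rw [← embedLin_apply hint hC, hμ, map_sum]
    refine Finset.sum_congr rfl fun q _ => ?_
    rw [map_smul, embedLin_apply, embed_dirac hφ hint]
  have hup : ‖embed φ μ‖ ^ 2 ≤ n * C ^ 2 := by
    rw [hemb]
    refine hle.trans ?_
    rw [← hF, ← nsmul_eq_mul]
    exact Finset.sum_le_card_nsmul _ _ _ fun q _ =>
      pow_le_pow_left₀ (norm_nonneg _) (hC _) 2
  have htv : (n : ℝ) ≤ tvNorm μ := by
    obtain ⟨A, hA, hA1, hA2⟩ := exists_separating (F.filter fun q => e q = 1)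
      (F.filter fun q => ¬ e q = 1) (Finset.disjoint_filter_filter_not _ _ _)
    refine le_trans (le_of_eq ?_) (sub_compl_le_tvNorm μ hA)
    have happ : ∀ B, MeasurableSet B →
        μ B = ∑ q ∈ F, e q * (Measure.dirac q.out : Measure X).real B := by
      intro B hB
      simp [hμ, Measure.toSignedMeasure_apply_measurable hB]
    rw [happ A hA, happ _ hA.compl, ← Finset.sum_sub_distrib, ← hF, Finset.card_eq_sum_ones,
      Nat.cast_sum]
    refine Finset.sum_congr rfl fun q hq => ?_
    by_cases h1 : e q = 1
    · have := hA1 q (by simp [hq, h1])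
      simp [measureReal_def, Measure.dirac_apply' _ hA, Measure.dirac_apply' _ hA.compl, this, h1]
    · have := hA2 q (by simp [hq, h1])
      have h2 := (he q).resolve_left h1
      simp [measureReal_def, Measure.dirac_apply' _ hA, Measure.dirac_apply' _ hA.compl, this, h2]
  have h1 : c * n ≤ ‖embed φ μ‖ := (mul_le_mul_of_nonneg_left htv hc.le).trans (hlow μ)
  have h2 : (c * n) ^ 2 ≤ n * C ^ 2 := (pow_le_pow_left₀ (by positivity) h1 2).trans hup
  have hn0 : (0 : ℝ) < n := lt_of_le_of_lt (by positivity) hn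
  rw [div_lt_iff₀ (by positivity)] at hn
  nlinarith

/-! ### The equivalences -/

/-- Over an incomplete `H` the Bochner integral is identically zero, so injectivity of the
embedding forces `X` to be empty, whence `H` is the closure of `{0}`: a contradiction. -/
lemma complete_of_injective {X : Type*} [MeasurableSpace X]
    {H : Type*} [NormedAddCommGroup H] [NormedSpace ℝ H] (φ : X → H)
    (hdense : (Submodule.span ℝ (Set.range φ)).topologicalClosure = ⊤)
    (hinj : Function.Injective (embed (X := X) φ)) : CompleteSpace H := by
  by_contra hcon
  have hzero : ∀ μ : SignedMeasure X, embed φ μ = 0 := fun μ => by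
    simp [embed, integral, hcon]
  have hX : IsEmpty X := by
    refine ⟨fun x => ?_⟩
    have h0 : (Measure.dirac x : Measure X).toSignedMeasure = 0 :=
      hinj ((hzero _).trans (hzero _).symm)
    have h1 : (Measure.dirac x : Measure X).toSignedMeasure Set.univ = 1 := by
      simp [Measure.toSignedMeasure_apply_measurable MeasurableSet.univ]
    rw [h0] at h1
    simp at h1
  have hsub : Subsingleton H := by
    refine subsingleton_of_forall_eq 0 fun h => ?_
    have : h ∈ (Submodule.span ℝ (Set.range φ)).topologicalClosure := hdense ▸ Submodule.mem_top
    rw [Set.range_eq_empty, Submodule.span_empty] at this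
    rw [← SetLike.mem_coe, Submodule.topologicalClosure_coe] at this
    simpa using this
  exact hcon inferInstance

/-- **Theorem (norm equivalence).** Let `H` be the RKHS of a bounded measurable kernel `k`
(presented via its canonical feature map `φ`) such that the kernel embedding
`Φ : ℳ(X) → H` is injective. Then the following are equivalent:
(i) `ℳ(X)` is finite dimensional; (ii) `‖·‖_H` and `‖·‖_TV` are equivalent on `ℳ(X)`;
(iii) the norm `‖·‖_H` on `ℳ(X)` is complete; (iv) `Φ : ℳ(X) → H` is surjective. -/
theorem norm_equivalence_tfae
    {X : Type*} [MeasurableSpace X]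
    {H : Type*} [NormedAddCommGroup H] [InnerProductSpace ℝ H]
    (k : X → X → ℝ) (φ : X → H)
    (hk : ∀ x y, k x y = ⟪φ x, φ y⟫_ℝ)
    (hkm : Measurable (Function.uncurry k))
    (hbdd : ∃ C : ℝ, ∀ x y, |k x y| ≤ C)
    (hφ : StronglyMeasurable φ)
    (hdense : (Submodule.span ℝ (Set.range φ)).topologicalClosure = ⊤)
    (hinj : Function.Injective (embed (X := X) φ)) :
    List.TFAE
      [ FiniteDimensional ℝ (SignedMeasure X),
        ∃ c C : ℝ, 0 < c ∧ 0 < C ∧ ∀ μ : SignedMeasure X,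
          c * tvNorm μ ≤ ‖embed φ μ‖ ∧ ‖embed φ μ‖ ≤ C * tvNorm μ,
        ∀ u : ℕ → SignedMeasure X,
          (∀ ε > (0 : ℝ), ∃ N, ∀ m ≥ N, ∀ n ≥ N, ‖embed φ (u m) - embed φ (u n)‖ < ε) →
            ∃ μ : SignedMeasure X,
              Tendsto (fun n => ‖embed φ (u n) - embed φ μ‖) atTop (nhds 0),
        Function.Surjective (embed (X := X) φ) ] := by
  have : CompleteSpace H := complete_of_injective φ hdense hinj
  obtain ⟨C, hCpos, hC⟩ : ∃ C : ℝ, 0 < C ∧ ∀ x, ‖φ x‖ ≤ C := by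
    obtain ⟨K, hK⟩ := hbdd
    refine ⟨|K| + 1, by positivity, fun x => ?_⟩
    have h := (le_abs_self _).trans (hK x x)
    rw [hk, real_inner_self_eq_norm_sq] at h
    nlinarith [le_abs_self K, abs_nonneg K, norm_nonneg (φ x)]
  have hint : ∀ (m : Measure X) [IsFiniteMeasure m], Integrable φ m := fun m _ =>
    Integrable.of_bound hφ.aestronglyMeasurable C (Eventually.of_forall hC)
  have hspan : Submodule.span ℝ (Set.range φ) ≤ LinearMap.range (embedLin hint hC) := by
    rw [Submodule.span_le]
    rintro _ ⟨x, rfl⟩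
    exact ⟨_, embed_dirac hφ hint x⟩
  have hclos : (LinearMap.range (embedLin hint hC)).topologicalClosure = ⊤ :=
    top_le_iff.1 (hdense ▸ Submodule.topologicalClosure_mono hspan)
  tfae_have 1 → 4 := by
    intro hfd h
    have hcl : IsClosed (LinearMap.range (embedLin hint hC) : Set H) :=
      Submodule.closed_of_finiteDimensional _
    rw [hcl.submodule_topologicalClosure_eq] at hclos
    exact LinearMap.range_eq_top.1 hclos h
  tfae_have 4 → 2 := by
    intro hsurj
    obtain ⟨c, hc, h⟩ := lower_bound_of_surjective hint hC hinj hsurj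
    exact ⟨c, C, hc, hCpos, fun μ => ⟨h μ, norm_embed_le hC μ⟩⟩
  tfae_have 2 → 1 := by
    rintro ⟨c, _, hc, _, h⟩
    have := finite_atoms hφ hint hC hc fun μ => (h μ).1
    exact finiteDimensional_of_finite_atoms
  tfae_have 4 → 3 := by
    intro hsurj u hu
    have hcau : CauchySeq fun n => embed φ (u n) := by
      refine Metric.cauchySeq_iff.2 fun ε hε => ?_
      simpa only [dist_eq_norm] using hu ε hε
    obtain ⟨h, hh⟩ := cauchySeq_tendsto_of_complete hcau
    obtain ⟨μ, rfl⟩ := hsurj h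
    exact ⟨μ, tendsto_iff_norm_sub_tendsto_zero.1 hh⟩
  tfae_have 3 → 4 := by
    intro hcomp h
    have hmem : h ∈ closure (LinearMap.range (embedLin hint hC) : Set H) := by
      rw [← Submodule.topologicalClosure_coe, hclos]
      trivial
    obtain ⟨y, hy, hlim⟩ := mem_closure_iff_seq_limit.1 hmem
    choose u hu using hy
    have hu' : ∀ n, embed φ (u n) = y n := hu
    obtain ⟨μ, hμ⟩ := hcomp u fun ε hε => by
      simpa only [dist_eq_norm, hu'] using Metric.cauchySeq_iff.1 hlim.cauchySeq ε hε
    refine ⟨μ, tendsto_nhds_unique (tendsto_iff_norm_sub_tendsto_zero.2 hμ) ?_⟩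
    simpa only [hu'] using hlim
  tfae_finish

end
end

section
/- Let (X,𝒜) be a measurable space with dim ℳ(X) = ∞ and H the RKHS of a characteristic kernel k on X. Then for every ε > 0 there exist probability measures Q₁, Q₂ ∈ ℳ₁(X) such that ‖Q₁ − Q₂‖_TV = 2 and ‖Q₁ − Q₂‖_H ≤ ε. -/
/-!
The underlying phenomenon is Mazur-like: a bounded sequence in an inner product space has convex
combinations, supported on disjoint blocks of indices, that are arbitrarily close to each other.

An infinite-dimensional space of signed measures forces the σ-algebra to be infinite, hence to
contain a strictly decreasing sequence `B n` (`exists_strictAnti_measurableSet`). Consider the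
probability measures concentrated on `B n` and vanishing on some later `B m`. They are closed under
midpoints, contain a Dirac mass at a point of `B n \ B (n + 1)`, and their embeddings are uniformly
bounded because the kernel is. The infima of `‖·‖ ^ 2` over these families of embeddings increase
to a finite limit, so by the parallelogram law near-minimisers for large indices are close to each
other (`exists_close_of_midpoint`). Taking the second near-minimiser concentrated on a set `B m`
which is null for the first one makes the two measures mutually singular; for mutually singular
probability measures the pair is its own Jordan decomposition, so the total variation of the
difference is `2`.

Only the linearity of `P ↦ ∫ x, φ x ∂P` and its norm bound are used, and both survive the convention
that Bochner integrals vanish in an incomplete space, so `H` need not be complete.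
-/

open MeasureTheory
open scoped InnerProductSpace

noncomputable section

open Classical in
/-- The signed measure associated with a measure (zero if the measure is not finite). -/
def signedOf {X : Type*} [MeasurableSpace X] (P : Measure X) : SignedMeasure X :=
  if h : IsFiniteMeasure P then @Measure.toSignedMeasure X _ P h else 0

/-- A bounded measurable kernel, given by its feature map `φ`, is characteristic if the
kernel mean embedding is injective on probability measures. -/
def Characteristic {X : Type*} [MeasurableSpace X] {H : Type*} [NormedAddCommGroup H]
    [InnerProductSpace ℝ H] (φ : X → H) : Prop :=
  ∀ P Q : Measure X, IsProbabilityMeasure P → IsProbabilityMeasure Q →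
    (∫ x, φ x ∂P) = (∫ x, φ x ∂Q) → P = Q

/-- Parallelogram-law argument: for a decreasing sequence of midpoint-closed sets, each with a point
in a fixed ball, some point of one of the sets is `ε`-close to all the sets simultaneously. -/
lemma exists_close_of_midpoint {H : Type*} [NormedAddCommGroup H] [InnerProductSpace ℝ H]
    (S : ℕ → Set H) (hanti : Antitone S) (C : ℝ) (hne : ∀ n, ∃ v ∈ S n, ‖v‖ ≤ C)
    (hmid : ∀ n, ∀ u ∈ S n, ∀ v ∈ S n, (1 / 2 : ℝ) • (u + v) ∈ S n) {ε : ℝ} (hε : 0 < ε) :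
    ∃ n, ∃ p ∈ S n, ∀ m, ∃ q ∈ S m, ‖p - q‖ ≤ ε := by
  let e : ℕ → ℝ := fun n => sInf ((fun v => ‖v‖ ^ 2) '' S n)
  have hbdd : ∀ n, BddBelow ((fun v => ‖v‖ ^ 2) '' S n) := fun n =>
    ⟨0, by rintro _ ⟨v, -, rfl⟩; positivity⟩
  have hle : ∀ n, ∀ v ∈ S n, e n ≤ ‖v‖ ^ 2 := fun n v hv => csInf_le (hbdd n) ⟨v, hv, rfl⟩
  have hnon : ∀ n, ((fun v => ‖v‖ ^ 2) '' S n).Nonempty := fun n => by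
    obtain ⟨v, hv, -⟩ := hne n
    exact ⟨_, v, hv, rfl⟩
  have heC : ∀ n, e n ≤ C ^ 2 := fun n => by
    obtain ⟨v, hv, hvC⟩ := hne n
    exact (hle n v hv).trans (by gcongr)
  have hbe : BddAbove (Set.range e) := ⟨C ^ 2, by rintro _ ⟨n, rfl⟩; exact heC n⟩
  -- The parallelogram law below yields `‖p - q‖ ^ 2 ≤ 8 δ`.
  set δ : ℝ := ε ^ 2 / 8 with hδ
  have hδ0 : 0 < δ := by positivity
  obtain ⟨n, hn⟩ := exists_lt_of_lt_ciSup (show (⨆ i, e i) - δ < ⨆ i, e i by linarith)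
  have happ : ∀ m, ∃ v ∈ S m, ‖v‖ ^ 2 < (⨆ i, e i) + δ := fun m => by
    have h1 : e m < (⨆ i, e i) + δ := by linarith [le_ciSup hbe m]
    obtain ⟨_, ⟨v, hv, rfl⟩, hlt⟩ := exists_lt_of_csInf_lt (hnon m) h1
    exact ⟨v, hv, hlt⟩
  obtain ⟨p, hp, hpn⟩ := happ n
  refine ⟨n, p, hp, fun m => ?_⟩
  obtain ⟨q, hq, hqn⟩ := happ (max n m)
  refine ⟨q, hanti (le_max_right n m) hq, ?_⟩
  have h1 := hle n _ (hmid n p hp q (hanti (le_max_left n m) hq))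
  rw [norm_smul, mul_pow] at h1
  norm_num at h1
  have h2 := parallelogram_law_with_norm ℝ p q
  have h3 : ‖p - q‖ ^ 2 ≤ ε ^ 2 := by nlinarith
  exact le_of_sq_le_sq h3 hε.le

/-- Halving argument: a set with infinitely many measurable subsets splits into two proper
measurable pieces, one of which again has infinitely many measurable subsets. -/
lemma exists_strictAnti_measurableSet {X : Type*} [MeasurableSpace X]
    (hinf : {A : Set X | MeasurableSet A}.Infinite) :
    ∃ B : ℕ → Set X, (∀ n, MeasurableSet (B n)) ∧ ∀ n, B (n + 1) ⊂ B n := by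
  let Big : Set X → Prop := fun A => MeasurableSet A ∧ {E | MeasurableSet E ∧ E ⊆ A}.Infinite
  have step : ∀ A : {A // Big A}, ∃ B : {A // Big A}, B.1 ⊂ A.1 := by
    rintro ⟨A, hA, hAi⟩
    obtain ⟨E, ⟨hE, hEA⟩, hE2⟩ := hAi.exists_notMem_finite (Set.toFinite {∅, A})
    simp only [Set.mem_insert_iff, Set.mem_singleton_iff, not_or] at hE2
    by_cases h1 : {F | MeasurableSet F ∧ F ⊆ E}.Infinite
    · exact ⟨⟨E, hE, h1⟩, hEA.ssubset_of_ne hE2.2⟩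
    by_cases h2 : {F | MeasurableSet F ∧ F ⊆ A \ E}.Infinite
    · refine ⟨⟨A \ E, hA.diff hE, h2⟩, Set.sdiff_subset.ssubset_of_ne fun h => hE2.1 ?_⟩
      rw [sdiff_eq_left] at h
      exact disjoint_self.1 (h.mono_left hEA)
    exfalso
    rw [Set.not_infinite] at h1 h2
    refine hAi ((h1.image2 (· ∪ ·) h2).subset ?_)
    rintro F ⟨hF, hFA⟩
    refine ⟨F ∩ E, ⟨hF.inter hE, Set.inter_subset_right⟩, F \ E,
      ⟨hF.diff hE, Set.sdiff_subset_sdiff_left hFA⟩, Set.inter_union_sdiff F E⟩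
  choose f hf using step
  have h0 : Big Set.univ := ⟨MeasurableSet.univ, by simpa using hinf⟩
  let s : ℕ → {A // Big A} := fun n => f^[n] ⟨Set.univ, h0⟩
  refine ⟨fun n => (s n).1, fun n => (s n).2.1, fun n => ?_⟩
  simp only [s, Function.iterate_succ_apply']
  exact hf _

lemma infinite_measurableSet {X : Type*} [MeasurableSpace X]
    (hdim : ¬ FiniteDimensional ℝ (SignedMeasure X)) : {A : Set X | MeasurableSet A}.Infinite := by
  intro hfin
  have : Finite {A : Set X | MeasurableSet A} := hfin
  let L : SignedMeasure X →ₗ[ℝ] ({A : Set X | MeasurableSet A} → ℝ) :=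
    { toFun := fun μ A => μ A.1
      map_add' := fun μ ν => rfl
      map_smul' := fun c μ => rfl }
  refine hdim (FiniteDimensional.of_injective L fun μ ν h => ?_)
  exact VectorMeasure.ext fun A hA => congrFun h ⟨A, hA⟩

lemma toJordanDecomposition_signedOf_sub {X : Type*} [MeasurableSpace X] (P Q : Measure X)
    [hP : IsFiniteMeasure P] [hQ : IsFiniteMeasure Q] (h : P ⟂ₘ Q) :
    (signedOf P - signedOf Q).toJordanDecomposition = ⟨P, Q, h⟩ := by
  apply SignedMeasure.toJordanDecomposition_eq
  simp [signedOf, hP, hQ, JordanDecomposition.toSignedMeasure]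

/-- **Theorem (indistinguishable distant distributions).** Let `(X,𝒜)` be a measurable
space with `dim ℳ(X) = ∞` and `H` the RKHS of a characteristic kernel `k` on `X`. Then for
every `ε > 0` there are probability measures `Q₁, Q₂` with `‖Q₁ − Q₂‖_TV = 2` and
`‖Q₁ − Q₂‖_H ≤ ε`. -/
theorem characteristic_far_apart_small_H_norm
    {X : Type*} [MeasurableSpace X]
    {H : Type*} [NormedAddCommGroup H] [InnerProductSpace ℝ H]
    (k : X → X → ℝ) (φ : X → H)
    (hk : ∀ x y, k x y = ⟪φ x, φ y⟫_ℝ)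
    (hkm : Measurable (Function.uncurry k))
    (hbdd : ∃ C : ℝ, ∀ x y, |k x y| ≤ C)
    (hφ : StronglyMeasurable φ)
    (hdense : (Submodule.span ℝ (Set.range φ)).topologicalClosure = ⊤)
    (hdim : ¬ FiniteDimensional ℝ (SignedMeasure X))
    (hchar : Characteristic φ) :
    ∀ ε > (0 : ℝ), ∃ Q₁ Q₂ : Measure X, IsProbabilityMeasure Q₁ ∧ IsProbabilityMeasure Q₂ ∧
      tvNorm (signedOf Q₁ - signedOf Q₂) = 2 ∧
      ‖embed φ (signedOf Q₁ - signedOf Q₂)‖ ≤ ε := by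
  intro ε hε
  obtain ⟨C, hC⟩ := hbdd
  have hφC : ∀ x, ‖φ x‖ ≤ Real.sqrt C := fun x => by
    apply Real.le_sqrt_of_sq_le
    rw [← real_inner_self_eq_norm_sq, ← hk]
    exact (le_abs_self _).trans (hC x x)
  have hint : ∀ P : Measure X, IsFiniteMeasure P → Integrable φ P := fun P _ =>
    Integrable.of_bound hφ.aestronglyMeasurable _ (Filter.Eventually.of_forall hφC)
  obtain ⟨B, hBm, hB⟩ := exists_strictAnti_measurableSet (infinite_measurableSet hdim)
  have hBanti : Antitone B := antitone_nat_of_succ_le fun n => (hB n).subset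
  let K : ℕ → Set (Measure X) := fun n =>
    {P | IsProbabilityMeasure P ∧ P (B n)ᶜ = 0 ∧ ∃ m, P (B m) = 0}
  obtain ⟨n, _, ⟨P, ⟨hP, -, m, hPm⟩, rfl⟩, hclose⟩ :=
    exists_close_of_midpoint (fun n => (fun P => ∫ x, φ x ∂P) '' K n)
      (by
        rintro i j hij _ ⟨P, ⟨hP, h1, h2⟩, rfl⟩
        exact ⟨P, ⟨hP, measure_mono_null (Set.compl_subset_compl.2 (hBanti hij)) h1, h2⟩, rfl⟩)
      (Real.sqrt C)
      (by
        intro n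
        obtain ⟨x, hx, hx'⟩ := Set.exists_of_ssubset (hB n)
        refine ⟨_, ⟨Measure.dirac x, ⟨inferInstance, ?_, n + 1, ?_⟩, rfl⟩, ?_⟩
        · simp [Measure.dirac_apply' _ (hBm n).compl, hx]
        · simp [Measure.dirac_apply' _ (hBm (n + 1)), hx']
        · simpa using norm_integral_le_of_norm_le_const (μ := Measure.dirac x)
            (Filter.Eventually.of_forall hφC))
      (by
        rintro n _ ⟨P, ⟨hP, hP1, i, hP2⟩, rfl⟩ _ ⟨Q, ⟨hQ, hQ1, j, hQ2⟩, rfl⟩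
        have e1 := measure_mono_null (hBanti (le_max_left i j)) hP2
        have e2 := measure_mono_null (hBanti (le_max_right i j)) hQ2
        refine ⟨(2⁻¹ : ENNReal) • (P + Q), ⟨⟨?_⟩, ?_, max i j, ?_⟩, ?_⟩
        · simp [ENNReal.inv_two_add_inv_two]
        · simp [hP1, hQ1]
        · simp [e1, e2]
        · simp only [integral_smul_measure, integral_add_measure (hint P inferInstance)
            (hint Q inferInstance)]
          norm_num)
      hε
  obtain ⟨_, ⟨Q, ⟨hQ, hQm, -⟩, rfl⟩, hPQ⟩ := hclose m
  have hs : P ⟂ₘ Q := ⟨B m, hBm m, hPm, hQm⟩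
  refine ⟨P, Q, hP, hQ, ?_, ?_⟩
  · simp only [tvNorm, SignedMeasure.totalVariation, toJordanDecomposition_signedOf_sub P Q hs]
    simp [one_add_one_eq_two]
  · simpa only [embed, toJordanDecomposition_signedOf_sub P Q hs] using hPQ

end
end

section
/- Let (X,𝒜) be a measurable space with dim ℳ(X) = ∞ and H the RKHS of a characteristic kernel k on X. Then for every probability measure P ∈ ℳ₁(X), every δ ∈ (0,2], and every ε ∈ (0,δ), there exist probability measures Q₁, Q₂ ∈ ℳ₁(X) such that ‖P − Q_i‖_TV ≤ δ for i = 1,2, ‖Q₁ − Q₂‖_TV = δ, and ‖Q₁ − Q₂‖_H ≤ ε. -/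
/-!
A signed measure `μ = μ₁ - μ₂` with `μ₁, μ₂` mutually singular of mass `δ / 2` can be realised as a
difference of probability measures near any `P`: take `Q₁ = (1 - δ/2) P + μ₁` and
`Q₂ = (1 - δ/2) P + μ₂`. Then `P - Qᵢ = (δ/2) P - μᵢ` has total variation at most `δ`, whereas
`Q₁ - Q₂ = μ₁ - μ₂` has total variation exactly `δ`, because this is its Jordan decomposition. It
remains to find such `μ` of small `H`-norm.

If `ℳ(X)` is infinite-dimensional, the `σ`-algebra is infinite, hence there is a sequence of points
`x₀, x₁, …` pairwise separated by measurable sets (`exists_separated_seq`). Their embeddings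
`vᵢ` are bounded by some `B` in the inner product space `H`. Each difference `v₂ᵢ - v₂ᵢ₊₁` can be
given a sign making its inner product with the sum of the previous ones nonpositive, so that the
signed sum of `n` differences has squared norm at most `4 B² n` (`exists_balanced_signs`). The
corresponding balanced signed combination of `2n` Dirac measures, rescaled by `δ / (2n)`, has
`H`-norm at most `δ B / √n`, which tends to zero.
-/


open MeasureTheory
open scoped InnerProductSpace

noncomputable section

open scoped NNReal ENNReal

/-- An infinite-dimensional space of signed measures forces infinitely many measurable sets: a
signed measure is determined by its values on the measurable sets. -/
lemma infinite_measurableSets {X : Type*} [MeasurableSpace X]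
    (hdim : ¬ FiniteDimensional ℝ (SignedMeasure X)) :
    Infinite {s : Set X // MeasurableSet s} := by
  by_contra h
  have hfin : Finite {s : Set X // MeasurableSet s} := not_infinite_iff_finite.mp h
  let L : SignedMeasure X →ₗ[ℝ] ({s : Set X // MeasurableSet s} → ℝ) :=
    { toFun := fun μ s => μ s.1
      map_add' := fun _ _ => rfl
      map_smul' := fun _ _ => rfl }
  refine hdim (FiniteDimensional.of_injective L fun μ ν hμν => ?_)
  ext i hi
  exact congrFun hμν ⟨i, hi⟩

/-- An infinite `σ`-algebra separates the points of some sequence. Otherwise the partition of `X`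
into classes of measurably indistinguishable points would be finite, and every measurable set is a
union of such classes. -/
lemma exists_separated_seq {X : Type*} [MeasurableSpace X]
    (hinf : Infinite {s : Set X // MeasurableSet s}) :
    ∃ x : ℕ → X, ∀ i j, i ≠ j → ∃ s, MeasurableSet s ∧ x i ∈ s ∧ x j ∉ s := by
  let f : X → Set {s : Set X // MeasurableSet s} := fun x => {s | x ∈ s.1}
  have hmem : ∀ (s : {s : Set X // MeasurableSet s}) (y : X), y ∈ s.1 ↔ f y ∈ f '' s.1 := by
    refine fun s y => ⟨fun h => ⟨y, h, rfl⟩, ?_⟩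
    rintro ⟨z, hz, hzy⟩
    have : s ∈ f z := hz
    rw [hzy] at this
    exact this
  have hrange : (Set.range f).Infinite := by
    intro hfin
    have hpow : (𝒫 (Set.range f)).Finite := hfin.powerset
    have := hpow.to_subtype
    let g : {s : Set X // MeasurableSet s} → 𝒫 (Set.range f) :=
      fun s => ⟨f '' s.1, Set.image_subset_range f s.1⟩
    have hg : Function.Injective g := by
      intro s t hst
      have hst' : f '' s.1 = f '' t.1 := congrArg Subtype.val hst
      ext y
      rw [hmem s y, hmem t y, hst']
    exact not_finite_iff_infinite.mpr hinf (Finite.of_injective g hg)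
  have := hrange.to_subtype
  let e := Infinite.natEmbedding (Set.range f)
  choose x hx using fun n => (e n).2
  refine ⟨x, fun i j hij => ?_⟩
  have hne : f (x i) ≠ f (x j) := by
    rw [hx, hx]
    exact fun h => hij (e.injective (Subtype.ext h))
  by_contra hcon
  push Not at hcon
  apply hne
  ext s
  refine ⟨fun h => hcon s.1 s.2 h, fun h => ?_⟩
  by_contra hi
  exact hcon s.1ᶜ s.2.compl hi h

/-- Points indexed by disjoint finite sets are separated by a single measurable set. -/
lemma exists_separating_set {X : Type*} [MeasurableSpace X] {x : ℕ → X}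
    (hx : ∀ i j, i ≠ j → ∃ s, MeasurableSet s ∧ x i ∈ s ∧ x j ∉ s)
    {I J : Finset ℕ} (hIJ : Disjoint I J) :
    ∃ s, MeasurableSet s ∧ (∀ i ∈ I, x i ∈ s) ∧ ∀ j ∈ J, x j ∉ s := by
  have hx' : ∀ i j, ∃ s, i ≠ j → MeasurableSet s ∧ x i ∈ s ∧ x j ∉ s := by
    intro i j
    by_cases h : i = j
    · exact ⟨∅, fun h' => absurd h h'⟩
    · obtain ⟨s, hs⟩ := hx i j h
      exact ⟨s, fun _ => hs⟩
  choose S hS using hx'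
  have hne : ∀ i ∈ I, ∀ j ∈ J, i ≠ j := fun i hi j hj h =>
    Finset.disjoint_left.mp hIJ hi (h ▸ hj)
  refine ⟨⋃ i ∈ I, ⋂ j ∈ J, S i j, ?_, ?_, ?_⟩
  · exact I.measurableSet_biUnion fun i hi =>
      J.measurableSet_biInter fun j hj => (hS i j (hne i hi j hj)).1
  · intro i hi
    simp only [Set.mem_iUnion, Set.mem_iInter]
    exact ⟨i, hi, fun j hj => (hS i j (hne i hi j hj)).2.1⟩
  · intro j hj h
    simp only [Set.mem_iUnion, Set.mem_iInter] at h
    obtain ⟨i, hi, h⟩ := h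
    exact (hS i j (hne i hi j hj)).2.2 (h j hj)

/-- In a bounded sequence, the consecutive differences `v₂ᵢ - v₂ᵢ₊₁`, `i < n`, admit signs for which
their sum has norm of order `√n`; `I` and `J` collect the indices with sign `+` and `-`. The sign
of each new difference makes its inner product with the previous sum nonpositive. -/
lemma exists_balanced_signs {H : Type*} [NormedAddCommGroup H] [InnerProductSpace ℝ H]
    (v : ℕ → H) (B : ℝ) (hv : ∀ i, ‖v i‖ ≤ B) (n : ℕ) :
    ∃ I J : Finset ℕ, Disjoint I J ∧ I.card = n ∧ J.card = n ∧
      (∀ i ∈ I, i < 2 * n) ∧ (∀ j ∈ J, j < 2 * n) ∧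
      ‖∑ i ∈ I, v i - ∑ j ∈ J, v j‖ ^ 2 ≤ n * (2 * B) ^ 2 := by
  induction n with
  | zero => exact ⟨∅, ∅, by simp⟩
  | succ n ih =>
    obtain ⟨I, J, hd, hI, hJ, hI', hJ', hn⟩ := ih
    -- The step for an arbitrary ordering `a, b` of the two new indices.
    have key : ∀ a b : ℕ, a ≠ b → 2 * n ≤ a → 2 * n ≤ b → a < 2 * (n + 1) → b < 2 * (n + 1) →
        ⟪∑ i ∈ I, v i - ∑ j ∈ J, v j, v a - v b⟫_ℝ ≤ 0 →
        ∃ I J : Finset ℕ, Disjoint I J ∧ I.card = n + 1 ∧ J.card = n + 1 ∧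
          (∀ i ∈ I, i < 2 * (n + 1)) ∧ (∀ j ∈ J, j < 2 * (n + 1)) ∧
          ‖∑ i ∈ I, v i - ∑ j ∈ J, v j‖ ^ 2 ≤ (n + 1 : ℕ) * (2 * B) ^ 2 := by
      intro a b hab ha hb ha' hb' hinner
      have haI : a ∉ I := fun h => by have := hI' a h; omega
      have haJ : a ∉ J := fun h => by have := hJ' a h; omega
      have hbI : b ∉ I := fun h => by have := hI' b h; omega
      have hbJ : b ∉ J := fun h => by have := hJ' b h; omega
      refine ⟨insert a I, insert b J, ?_, ?_, ?_, ?_, ?_, ?_⟩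
      · rw [Finset.disjoint_insert_left, Finset.disjoint_insert_right]
        exact ⟨by simp [hab, haJ], hbI, hd⟩
      · rw [Finset.card_insert_of_notMem haI, hI]
      · rw [Finset.card_insert_of_notMem hbJ, hJ]
      · intro i hi
        rcases Finset.mem_insert.mp hi with rfl | hi
        · exact ha'
        · have := hI' i hi; omega
      · intro j hj
        rcases Finset.mem_insert.mp hj with rfl | hj
        · exact hb'
        · have := hJ' j hj; omega
      · rw [Finset.sum_insert haI, Finset.sum_insert hbJ, add_sub_add_comm, add_comm,
          norm_add_sq_real]
        have h1 : ‖v a - v b‖ ≤ 2 * B := by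
          linarith [norm_sub_le (v a) (v b), hv a, hv b]
        have h2 : ‖v a - v b‖ ^ 2 ≤ (2 * B) ^ 2 := pow_le_pow_left₀ (norm_nonneg _) h1 2
        push_cast
        linarith
    rcases le_total ⟪∑ i ∈ I, v i - ∑ j ∈ J, v j, v (2 * n) - v (2 * n + 1)⟫_ℝ 0 with h | h
    · exact key (2 * n) (2 * n + 1) (by omega) (by omega) (by omega) (by omega) (by omega) h
    · refine key (2 * n + 1) (2 * n) (by omega) (by omega) (by omega) (by omega) (by omega) ?_
      rw [← neg_sub (v (2 * n)), inner_neg_right]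
      linarith

lemma signedOf_eq {X : Type*} [MeasurableSpace X] (P : Measure X) [hP : IsFiniteMeasure P] :
    signedOf P = P.toSignedMeasure := by
  rw [signedOf, dif_pos hP]

lemma signedOf_add_sub_add {X : Type*} [MeasurableSpace X] (R μ ν : Measure X)
    [IsFiniteMeasure R] [IsFiniteMeasure μ] [IsFiniteMeasure ν] :
    signedOf (R + μ) - signedOf (R + ν) = μ.toSignedMeasure - ν.toSignedMeasure := by
  rw [signedOf_eq, signedOf_eq, Measure.toSignedMeasure_add, Measure.toSignedMeasure_add,
    add_sub_add_left_eq_sub]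

lemma toJordanDecomposition_sub {X : Type*} [MeasurableSpace X] (μ ν : Measure X)
    [IsFiniteMeasure μ] [IsFiniteMeasure ν] (h : Measure.MutuallySingular μ ν) :
    (μ.toSignedMeasure - ν.toSignedMeasure).toJordanDecomposition =
      { posPart := μ, negPart := ν, mutuallySingular := h } :=
  SignedMeasure.toJordanDecomposition_eq rfl

/-- The triangle inequality for the total variation norm of a difference of measures. -/
lemma tvNorm_sub_le {X : Type*} [MeasurableSpace X] (μ ν : Measure X)
    [IsFiniteMeasure μ] [IsFiniteMeasure ν] :
    tvNorm (μ.toSignedMeasure - ν.toSignedMeasure) ≤ μ.real Set.univ + ν.real Set.univ := by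
  set s := μ.toSignedMeasure - ν.toSignedMeasure with hs
  obtain ⟨i, hi, hi₂, hi₃, hpos, hneg⟩ := s.toJordanDecomposition_spec
  have h1 : s.toJordanDecomposition.posPart.real Set.univ = μ.real i - ν.real i := by
    rw [hpos, SignedMeasure.toMeasureOfZeroLE_real_apply _ hi₂ hi MeasurableSet.univ,
      Set.inter_univ, hs, Measure.toSignedMeasure_sub_apply hi]
  have h2 : s.toJordanDecomposition.negPart.real Set.univ = ν.real iᶜ - μ.real iᶜ := by
    rw [hneg, SignedMeasure.toMeasureOfLEZero_real_apply _ hi₃ hi.compl MeasurableSet.univ,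
      Set.inter_univ, hs, Measure.toSignedMeasure_sub_apply hi.compl, neg_sub]
  have h3 : tvNorm s = s.toJordanDecomposition.posPart.real Set.univ +
      s.toJordanDecomposition.negPart.real Set.univ :=
    measureReal_add_apply
  rw [h3, h1, h2]
  have h4 : μ.real i ≤ μ.real Set.univ := measureReal_mono (Set.subset_univ _)
  have h5 : ν.real iᶜ ≤ ν.real Set.univ := measureReal_mono (Set.subset_univ _)
  linarith [measureReal_nonneg (μ := ν) (s := i), measureReal_nonneg (μ := μ) (s := iᶜ)]

/-- The measure giving mass `a` to each of the points `x i`, `i ∈ I`. -/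
def pointMasses {X : Type*} [MeasurableSpace X] (x : ℕ → X) (a : ℝ≥0) (I : Finset ℕ) : Measure X :=
  a • ∑ i ∈ I, Measure.dirac (x i)

instance {X : Type*} [MeasurableSpace X] (x : ℕ → X) (a : ℝ≥0) (I : Finset ℕ) :
    IsFiniteMeasure (pointMasses x a I) := by
  unfold pointMasses; infer_instance

lemma pointMasses_univ {X : Type*} [MeasurableSpace X] (x : ℕ → X) (a : ℝ≥0) (I : Finset ℕ) :
    pointMasses x a I Set.univ = (a * I.card : ℝ≥0) := by
  rw [pointMasses, Measure.smul_apply, Measure.finsetSum_apply, ENNReal.smul_def]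
  simp

lemma pointMasses_apply_eq_zero {X : Type*} [MeasurableSpace X] (x : ℕ → X) (a : ℝ≥0)
    (I : Finset ℕ) {s : Set X} (hs : MeasurableSet s) (h : ∀ i ∈ I, x i ∉ s) :
    pointMasses x a I s = 0 := by
  have : ∑ i ∈ I, Measure.dirac (x i) s = 0 :=
    Finset.sum_eq_zero fun i hi => by simp [Measure.dirac_apply' _ hs, h i hi]
  simp [pointMasses, this]

lemma integral_pointMasses {X : Type*} [MeasurableSpace X] {H : Type*} [NormedAddCommGroup H]
    [NormedSpace ℝ H] {φ : X → H} (hφ : ∀ y, Integrable φ (Measure.dirac y))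
    (x : ℕ → X) (a : ℝ≥0) (I : Finset ℕ) :
    ∫ y, φ y ∂(pointMasses x a I) = (a : ℝ) • ∑ i ∈ I, ∫ y, φ y ∂(Measure.dirac (x i)) := by
  rw [pointMasses, integral_smul_nnreal_measure, integral_finsetSum_measure fun i _ => hφ _]
  rfl

/-- **Corollary (indistinguishable distributions everywhere).** Let `(X,𝒜)` be a measurable
space with `dim ℳ(X) = ∞` and `H` the RKHS of a characteristic kernel `k` on `X`. Then for
every probability measure `P`, every `δ ∈ (0,2]` and every `ε ∈ (0,δ)`, there are
probability measures `Q₁, Q₂` with `‖P − Q_i‖_TV ≤ δ` for `i = 1,2`, `‖Q₁ − Q₂‖_TV = δ` and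
`‖Q₁ − Q₂‖_H ≤ ε`. -/
theorem characteristic_far_apart_small_H_norm_local
    {X : Type*} [MeasurableSpace X]
    {H : Type*} [NormedAddCommGroup H] [InnerProductSpace ℝ H]
    (k : X → X → ℝ) (φ : X → H)
    (hk : ∀ x y, k x y = ⟪φ x, φ y⟫_ℝ)
    (hkm : Measurable (Function.uncurry k))
    (hbdd : ∃ C : ℝ, ∀ x y, |k x y| ≤ C)
    (hφ : StronglyMeasurable φ)
    (hdense : (Submodule.span ℝ (Set.range φ)).topologicalClosure = ⊤)
    (hdim : ¬ FiniteDimensional ℝ (SignedMeasure X))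
    (hchar : Characteristic φ) :
    ∀ (P : Measure X), IsProbabilityMeasure P → ∀ δ ∈ Set.Ioc (0 : ℝ) 2, ∀ ε ∈ Set.Ioo 0 δ,
      ∃ Q₁ Q₂ : Measure X, IsProbabilityMeasure Q₁ ∧ IsProbabilityMeasure Q₂ ∧
        tvNorm (signedOf P - signedOf Q₁) ≤ δ ∧ tvNorm (signedOf P - signedOf Q₂) ≤ δ ∧
        tvNorm (signedOf Q₁ - signedOf Q₂) = δ ∧
        ‖embed φ (signedOf Q₁ - signedOf Q₂)‖ ≤ ε := by
  obtain ⟨C, hC⟩ := hbdd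
  obtain ⟨x, hx⟩ := exists_separated_seq (infinite_measurableSets hdim)
  intro P hP δ hδ ε hε
  have hδ0 : 0 < δ := hδ.1
  have hnorm : ∀ y, ‖φ y‖ ≤ √C := by
    intro y
    apply Real.le_sqrt_of_sq_le
    rw [← real_inner_self_eq_norm_sq, ← hk]
    exact (le_abs_self _).trans (hC y y)
  have hint : ∀ y, Integrable φ (Measure.dirac y) := fun y =>
    Integrable.of_bound hφ.aestronglyMeasurable (√C) (Filter.Eventually.of_forall hnorm)
  -- `H` need not be complete, so `v i` cannot be replaced by `φ (x i)`; only the bound matters.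
  let v : ℕ → H := fun i => ∫ y, φ y ∂(Measure.dirac (x i))
  have hv : ∀ i, ‖v i‖ ≤ √C := by
    intro i
    have := norm_integral_le_of_norm_le_const (μ := Measure.dirac (x i))
      (Filter.Eventually.of_forall hnorm)
    simpa using this
  -- `n` is chosen so that `δ √C / √n ≤ ε`.
  obtain ⟨n, hn⟩ := exists_nat_gt ((δ * √C / ε) ^ 2)
  have hn0 : (0 : ℝ) < n := (sq_nonneg _).trans_lt hn
  have hn0' : n ≠ 0 := by rintro rfl; simp at hn0
  obtain ⟨I, J, hIJ, hI, hJ, -, -, hsum⟩ := exists_balanced_signs v (√C) hv n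
  obtain ⟨s, hs, hsI, hsJ⟩ := exists_separating_set hx hIJ
  let c : ℝ≥0 := ⟨δ / 2, by positivity⟩
  let d : ℝ≥0 := ⟨1 - δ / 2, by linarith [hδ.2]⟩
  have hcd : d + c = 1 := by
    apply NNReal.eq
    change (1 - δ / 2) + δ / 2 = 1
    ring
  let a : ℝ≥0 := c / n
  have han : a * n = c := by
    have : (n : ℝ≥0) ≠ 0 := Nat.cast_ne_zero.mpr hn0'
    exact div_mul_cancel₀ c this
  let μ := pointMasses x a I
  let ν := pointMasses x a J
  have hμ : μ Set.univ = (c : ℝ≥0∞) := by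
    rw [pointMasses_univ, hI, han]
  have hν : ν Set.univ = (c : ℝ≥0∞) := by
    rw [pointMasses_univ, hJ, han]
  have hsing : Measure.MutuallySingular μ ν := by
    refine ⟨sᶜ, hs.compl, pointMasses_apply_eq_zero x a I hs.compl fun i hi h => h (hsI i hi), ?_⟩
    rw [compl_compl]
    exact pointMasses_apply_eq_zero x a J hs hsJ
  have hprob : ∀ ρ : Measure X, ρ Set.univ = (c : ℝ≥0∞) → IsProbabilityMeasure (d • P + ρ) := by
    intro ρ hρ
    constructor
    rw [Measure.add_apply, hρ, Measure.smul_apply, measure_univ, ENNReal.smul_def, smul_eq_mul,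
      mul_one, ← ENNReal.coe_add, hcd, ENNReal.coe_one]
  have hnear : ∀ ρ : Measure X, IsFiniteMeasure ρ → ρ Set.univ = (c : ℝ≥0∞) →
      tvNorm (signedOf P - signedOf (d • P + ρ)) ≤ δ := by
    intro ρ hfin hρ
    have hPeq : P = d • P + c • P := by rw [← add_smul, hcd, one_smul]
    have h1 : signedOf P - signedOf (d • P + ρ) =
        (c • P).toSignedMeasure - ρ.toSignedMeasure := by
      rw [← signedOf_add_sub_add (d • P) (c • P) ρ, ← hPeq]
    rw [h1]
    refine (tvNorm_sub_le _ _).trans (le_of_eq ?_)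
    have h2 : ρ.real Set.univ = δ / 2 := by
      rw [measureReal_def, hρ]; rfl
    have h3 : (c • P).real Set.univ = δ / 2 := by
      rw [measureReal_nnreal_smul_apply, probReal_univ, mul_one]; rfl
    rw [h2, h3]
    ring
  refine ⟨d • P + μ, d • P + ν, hprob μ hμ, hprob ν hν, hnear μ inferInstance hμ,
    hnear ν inferInstance hν, ?_, ?_⟩
  · rw [signedOf_add_sub_add, tvNorm, SignedMeasure.totalVariation,
      toJordanDecomposition_sub μ ν hsing, Measure.add_apply, hμ, hν, ← ENNReal.coe_add]
    change δ / 2 + δ / 2 = δ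
    ring
  · rw [signedOf_add_sub_add, embed, toJordanDecomposition_sub μ ν hsing]
    change ‖∫ y, φ y ∂μ - ∫ y, φ y ∂ν‖ ≤ ε
    rw [integral_pointMasses hint, integral_pointMasses hint, ← smul_sub, norm_smul]
    change ‖(a : ℝ)‖ * ‖∑ i ∈ I, v i - ∑ j ∈ J, v j‖ ≤ ε
    have ha : (a : ℝ) = δ / 2 / n := rfl
    rw [Real.norm_of_nonneg (NNReal.coe_nonneg a), ha]
    refine abs_le_of_sq_le_sq' ?_ hε.1.le |>.2
    rw [mul_pow]
    calc (δ / 2 / n) ^ 2 * ‖∑ i ∈ I, v i - ∑ j ∈ J, v j‖ ^ 2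
        ≤ (δ / 2 / n) ^ 2 * (n * (2 * √C) ^ 2) := by gcongr
      _ = (δ * √C / ε) ^ 2 * (ε ^ 2 / n) := by
          have := hε.1.ne'
          field_simp
      _ ≤ n * (ε ^ 2 / n) := by gcongr
      _ = ε ^ 2 := by field_simp

end
end

section
/- Let (X,𝒜,ν) be a σ-finite measure space and k a bounded measurable kernel with RKHS H for which the inclusion I_ν : H → L²(ν) is compact and injective, with eigenvalue–eigenfunction families (λ_i)_{i∈I} ⊂ (0,∞) and (e_i)_{i∈I} ⊂ H of the integral operator T_{k,ν}. Then for all finite signed measures μ₁, μ₂ ∈ ℳ(X) one has ∫_X ∫_X k(x,x') dμ₁(x) dμ₂(x') = ∑_{i∈I} λ_i (∫_X e_i dμ₁)(∫_X e_i dμ₂). -/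
/-!
The expansion is obtained by integrating Mercer's series term by term, once in each variable.
The arithmetic-geometric mean inequality dominates the `i`-th term `λᵢ eᵢ(x) eᵢ(x')` by
`(λᵢ eᵢ(x)² + λᵢ eᵢ(x')²) / 2`, and on the diagonal Mercer's series sums to the bounded function
`k(x,x)`; so the dominating series is summable with bounded, hence integrable, sum, and dominated
convergence applies (`hasSum_integral_mercer` for one variable, `hasSum_integral_integral_mercer`
for both). This settles finite positive measures. A signed measure is the difference of
the two parts of its Jordan decomposition, and both sides are bilinear in these parts.

All integrands are real-valued: `H` is not assumed complete, so the Bochner integral of the feature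
map `φ` could be the junk value `0`.
-/

open MeasureTheory
open scoped InnerProductSpace

noncomputable section

/-- Integral of a real function against a finite signed measure. -/
def sInt {X : Type*} [MeasurableSpace X] (μ : SignedMeasure X) (f : X → ℝ) : ℝ :=
  (∫ x, f x ∂μ.toJordanDecomposition.posPart) - ∫ x, f x ∂μ.toJordanDecomposition.negPart

section Mercer

variable {X : Type*} {k : X → X → ℝ} {ι : Type*} {lam : ι → ℝ}
  {e : ι → X → ℝ} {C : ℝ}

theorem abs_mercer_term_le {l : ℝ} (hl : 0 < l) (a b : ℝ) :
    |l * a * b| ≤ (l * a * a + l * b * b) / 2 := by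
  rw [abs_le]
  constructor
  · nlinarith [mul_nonneg hl.le (sq_nonneg (a + b))]
  · nlinarith [mul_nonneg hl.le (sq_nonneg (a - b))]

theorem mercer_diag_le (hlam : ∀ i, 0 < lam i) (hC : ∀ x y, |k x y| ≤ C)
    (hm : ∀ x x', HasSum (fun i => lam i * e i x * e i x') (k x x')) (i : ι) (x : X) :
    lam i * e i x * e i x ≤ C := by
  refine (le_hasSum (hm x x) i fun j _ => ?_).trans ((le_abs_self _).trans (hC x x))
  rw [mul_assoc]
  exact mul_nonneg (hlam j).le (mul_self_nonneg _)

variable [MeasurableSpace X]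

theorem integrable_mercer_diag (hlam : ∀ i, 0 < lam i) (hC : ∀ x y, |k x y| ≤ C)
    (hm : ∀ x x', HasSum (fun i => lam i * e i x * e i x') (k x x'))
    (hem : ∀ i, StronglyMeasurable (e i)) (b : Measure X) [IsFiniteMeasure b] (i : ι) :
    Integrable (fun x => lam i * e i x * e i x) b := by
  refine Integrable.of_bound (((hem i).const_mul _).mul (hem i)).aestronglyMeasurable C
    (ae_of_all _ fun x => ?_)
  rw [Real.norm_of_nonneg]
  · exact mercer_diag_le hlam hC hm i x
  · rw [mul_assoc]
    exact mul_nonneg (hlam i).le (mul_self_nonneg _)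

theorem integrable_kernel_diag (hkm : Measurable (Function.uncurry k))
    (hC : ∀ x y, |k x y| ≤ C) (b : Measure X) [IsFiniteMeasure b] :
    Integrable (fun x => k x x) b :=
  Integrable.of_bound
    (hkm.comp (measurable_id.prodMk measurable_id)).stronglyMeasurable.aestronglyMeasurable C
    (ae_of_all _ fun x => hC x x)

theorem integrable_kernel_right (hkm : Measurable (Function.uncurry k))
    (hC : ∀ x y, |k x y| ≤ C) (b : Measure X) [IsFiniteMeasure b] (x : X) :
    Integrable (k x) b :=
  Integrable.of_bound
    (hkm.comp measurable_prodMk_left).stronglyMeasurable.aestronglyMeasurable C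
    (ae_of_all _ fun y => hC x y)

theorem integrable_integral_kernel (hkm : Measurable (Function.uncurry k))
    (hC : ∀ x y, |k x y| ≤ C) (a b : Measure X) [IsFiniteMeasure a] [IsFiniteMeasure b] :
    Integrable (fun x => ∫ y, k x y ∂b) a := by
  refine Integrable.of_bound
    hkm.stronglyMeasurable.integral_prod_right.aestronglyMeasurable (C * b.real Set.univ)
    (ae_of_all _ fun x => ?_)
  exact norm_integral_le_of_norm_le_const (ae_of_all _ fun y => hC x y)

/-- Integrated diagonal: `∑ᵢ λᵢ ∫ eᵢ² db = ∫ k(x,x) db(x)`. It provides the summable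
constants in the domination of the second integration. -/
theorem hasSum_integral_mercer_diag [Countable ι] (hlam : ∀ i, 0 < lam i)
    (hkm : Measurable (Function.uncurry k)) (hC : ∀ x y, |k x y| ≤ C)
    (hm : ∀ x x', HasSum (fun i => lam i * e i x * e i x') (k x x'))
    (hem : ∀ i, StronglyMeasurable (e i)) (b : Measure X) [IsFiniteMeasure b] :
    HasSum (fun i => ∫ x, lam i * e i x * e i x ∂b) (∫ x, k x x ∂b) := by
  refine hasSum_integral_of_dominated_convergence (fun i x => lam i * e i x * e i x)
    (fun i => (integrable_mercer_diag hlam hC hm hem b i).aestronglyMeasurable)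
    (fun i => ae_of_all _ fun x => ?_) (ae_of_all _ fun x => (hm x x).summable) ?_
    (ae_of_all _ fun x => hm x x)
  · rw [Real.norm_of_nonneg]
    rw [mul_assoc]
    exact mul_nonneg (hlam i).le (mul_self_nonneg _)
  · simp_rw [fun x => (hm x x).tsum_eq]
    exact integrable_kernel_diag hkm hC b

/-- Mercer's series may be integrated term by term in its second variable. -/
theorem hasSum_integral_mercer [Countable ι] (hlam : ∀ i, 0 < lam i)
    (hkm : Measurable (Function.uncurry k)) (hC : ∀ x y, |k x y| ≤ C)
    (hm : ∀ x x', HasSum (fun i => lam i * e i x * e i x') (k x x'))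
    (hem : ∀ i, StronglyMeasurable (e i)) (b : Measure X) [IsFiniteMeasure b] (x : X) :
    HasSum (fun i => lam i * e i x * ∫ y, e i y ∂b) (∫ y, k x y ∂b) := by
  have hs : ∀ y, HasSum (fun i => (lam i * e i x * e i x + lam i * e i y * e i y) / 2)
      ((k x x + k y y) / 2) := fun y => ((hm x x).add (hm y y)).div_const 2
  simp_rw [← integral_const_mul]
  refine hasSum_integral_of_dominated_convergence
    (fun i y => (lam i * e i x * e i x + lam i * e i y * e i y) / 2)
    (fun i => ((hem i).const_mul _).aestronglyMeasurable)
    (fun i => ae_of_all _ fun y => abs_mercer_term_le (hlam i) _ _)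
    (ae_of_all _ fun y => (hs y).summable) ?_ (ae_of_all _ fun y => hm x y)
  simp_rw [fun y => (hs y).tsum_eq]
  exact ((integrable_const _).add (integrable_kernel_diag hkm hC b)).div_const 2

/-- The eigen expansion of the double integral for finite positive measures. -/
theorem hasSum_integral_integral_mercer [Countable ι] (hlam : ∀ i, 0 < lam i)
    (hkm : Measurable (Function.uncurry k)) (hC : ∀ x y, |k x y| ≤ C)
    (hm : ∀ x x', HasSum (fun i => lam i * e i x * e i x') (k x x'))
    (hem : ∀ i, StronglyMeasurable (e i)) (a b : Measure X)
    [IsFiniteMeasure a] [IsFiniteMeasure b] :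
    HasSum (fun i => lam i * (∫ x, e i x ∂a) * ∫ y, e i y ∂b) (∫ x, ∫ y, k x y ∂b ∂a) := by
  -- The domination of the integrand in `y`, integrated against `b`.
  have hs : ∀ x, HasSum
      (fun i => (b.real Set.univ * (lam i * e i x * e i x)
        + ∫ y, lam i * e i y * e i y ∂b) / 2)
      ((b.real Set.univ * k x x + ∫ y, k y y ∂b) / 2) := fun x =>
    (((hm x x).mul_left _).add (hasSum_integral_mercer_diag hlam hkm hC hm hem b)).div_const 2
  have key := hasSum_integral_of_dominated_convergence (μ := a)
    (F := fun i x => lam i * e i x * ∫ y, e i y ∂b) (f := fun x => ∫ y, k x y ∂b)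
    (fun i x => (b.real Set.univ * (lam i * e i x * e i x)
        + ∫ y, lam i * e i y * e i y ∂b) / 2)
    (fun i => (((hem i).const_mul _).mul_const _).aestronglyMeasurable)
    (fun i => ae_of_all _ fun x => ?_)
    (ae_of_all _ fun x => (hs x).summable) ?_
    (ae_of_all _ fun x => hasSum_integral_mercer hlam hkm hC hm hem b x)
  · simpa only [integral_mul_const, integral_const_mul] using key
  · have hi := integrable_mercer_diag hlam hC hm hem b i
    have h : ‖∫ y, lam i * e i x * e i y ∂b‖
        ≤ ∫ y, (lam i * e i x * e i x + lam i * e i y * e i y) / 2 ∂b :=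
      norm_integral_le_of_norm_le (((integrable_const _).add hi).div_const 2)
        (ae_of_all _ fun y => abs_mercer_term_le (hlam i) _ _)
    rwa [integral_const_mul, integral_div, integral_add (integrable_const _) hi,
      integral_const, smul_eq_mul] at h
  · simp_rw [fun x => (hs x).tsum_eq]
    exact (((integrable_kernel_diag hkm hC a).const_mul _).add (integrable_const _)).div_const 2

end Mercer

/-- **Lemma (eigen expansion of the double integral).** Let `(X,𝒜,ν)` be a σ-finite measure
space and `k` a bounded measurable kernel with RKHS `H` (presented via the canonical feature
map `φ`) for which the inclusion `I_ν : H → L²(ν)` is compact and injective; the eigenvalues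
`(λ_i)` of the integral operator `T_{k,ν}` are positive, the eigenfunctions `e_i ∈ H` form an
orthonormal system in `L²(ν)`, `(√λ_i e_i)` is an orthonormal basis of `H`, and the Mercer
representation `k(x,x') = ∑_i λ_i e_i(x) e_i(x')` holds.  Then for all finite signed measures
`μ₁, μ₂` one has `∫∫ k dμ₁ dμ₂ = ∑_i λ_i (∫ e_i dμ₁)(∫ e_i dμ₂)`. -/
theorem double_integral_eigen_expansion
    {X : Type*} [MeasurableSpace X] (ν : Measure X) [SigmaFinite ν]
    {H : Type*} [NormedAddCommGroup H] [InnerProductSpace ℝ H]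
    (k : X → X → ℝ) (φ : X → H)
    (hk : ∀ x y, k x y = ⟪φ x, φ y⟫_ℝ)
    (hkm : Measurable (Function.uncurry k))
    (hbdd : ∃ C : ℝ, ∀ x y, |k x y| ≤ C)
    (hφ : StronglyMeasurable φ)
    {ι : Type*} [Countable ι] [DecidableEq ι] (lam : ι → ℝ) (e : ι → X → ℝ) (f : ι → H)
    (hlam : ∀ i, 0 < lam i)
    (he : ∀ i x, e i x = ⟪f i, φ x⟫_ℝ)
    (hons : ∀ i j, (∫ x, e i x * e j x ∂ν) = if i = j then 1 else 0)
    (honb : Orthonormal ℝ (fun i => Real.sqrt (lam i) • f i))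
    (honb' : (Submodule.span ℝ (Set.range fun i => Real.sqrt (lam i) • f i)).topologicalClosure
        = ⊤)
    (hmercer : ∀ x x', HasSum (fun i => lam i * e i x * e i x') (k x x')) :
    ∀ μ₁ μ₂ : SignedMeasure X,
      HasSum (fun i => lam i * sInt μ₁ (e i) * sInt μ₂ (e i))
        (sInt μ₁ (fun x => sInt μ₂ (fun x' => k x x'))) := by
  intro μ₁ μ₂
  obtain ⟨C, hC⟩ := hbdd
  have hem : ∀ i, StronglyMeasurable (e i) := fun i => by
    rw [show e i = fun x => ⟪f i, φ x⟫_ℝ from funext (he i)]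
    exact stronglyMeasurable_const.inner hφ
  have hS := fun (a b : Measure X) [IsFiniteMeasure a] [IsFiniteMeasure b] =>
    hasSum_integral_integral_mercer hlam hkm hC hmercer hem a b
  have hI := fun (a b : Measure X) [IsFiniteMeasure a] [IsFiniteMeasure b] =>
    integrable_integral_kernel hkm hC a b
  unfold sInt
  rw [integral_sub (hI _ _) (hI _ _), integral_sub (hI _ _) (hI _ _)]
  have key := ((hS μ₁.toJordanDecomposition.posPart μ₂.toJordanDecomposition.posPart).sub
    (hS μ₁.toJordanDecomposition.posPart μ₂.toJordanDecomposition.negPart)).sub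
    ((hS μ₁.toJordanDecomposition.negPart μ₂.toJordanDecomposition.posPart).sub
    (hS μ₁.toJordanDecomposition.negPart μ₂.toJordanDecomposition.negPart))
  refine Eq.subst (motive := fun g => HasSum g _) (funext fun i => ?_) key
  ring

end
end

section
/- Let (X,τ) be a locally compact Hausdorff space such that the space ℳ_R(X) of finite signed Radon measures is strictly smaller than the space ℳ(X) of all finite signed Borel measures. Then no C₀(X)-kernel on X is strictly integrally positive definite with respect to ℳ(X). -/
/-!
The Riesz representation theorem provides, for every finite Borel measure, a finite regular measure
with the same integrals on `C_c(X)` (`exists_regular_integral_eq`), and these integrals then agree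
on all of `C₀(X)` by uniform approximation (`integral_eq_of_tendsto_cocompact`). Applied to the two
parts of the Jordan decomposition of a signed measure `μ` that is not Radon, this yields a Radon
signed measure `ν` such that `σ = μ - ν` is nonzero and annihilates `C₀(X)`
(`exists_ne_zero_sInt_eq_zero`). Since every section `k x` of a `C₀(X)`-kernel lies in `C₀(X)`, the
inner integral in `∫∫ k dσ dσ` vanishes identically, so `k` is not strictly positive definite
at `σ`.
-/

open MeasureTheory Filter
open scoped InnerProductSpace

noncomputable section

/-- A finite signed Borel measure is Radon if it is the difference of two finite regular
Borel measures. -/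
def IsRadonSigned {X : Type*} [TopologicalSpace X] [MeasurableSpace X]
    (μ : SignedMeasure X) : Prop :=
  ∃ (ρ₁ ρ₂ : Measure X) (_ : IsFiniteMeasure ρ₁) (_ : IsFiniteMeasure ρ₂),
    ρ₁.Regular ∧ ρ₂.Regular ∧ μ = ρ₁.toSignedMeasure - ρ₂.toSignedMeasure

/-- A continuous function vanishing at infinity is a uniform limit of compactly supported ones. -/
lemma exists_compactlySupported_abs_sub_le {X : Type*} [TopologicalSpace X] [T2Space X] {f : X → ℝ}
    (hf : Continuous f) (hf0 : Tendsto f (cocompact X) (nhds 0)) {ε : ℝ} (hε : 0 < ε) :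
    ∃ g : CompactlySupportedContinuousMap X ℝ, ∀ x, |f x - g x| ≤ ε := by
  have hev : ∀ᶠ x in cocompact X, |f x| < ε := by
    have := hf0.abs
    rw [abs_zero] at this
    exact this.eventually_lt_const hε
  obtain ⟨K, hK, hKsub⟩ := mem_cocompact'.1 hev
  -- Soft thresholding: subtracting the truncation of `f` to `[-ε, ε]` kills `f` where `|f| < ε`.
  refine ⟨⟨⟨fun x => f x - max (-ε) (min (f x) ε), by fun_prop⟩,
    HasCompactSupport.intro hK fun x hx => ?_⟩, fun x => ?_⟩
  · have hlt : |f x| < ε := by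
      by_contra h
      exact hx (hKsub h)
    rw [abs_lt] at hlt
    change f x - max (-ε) (min (f x) ε) = 0
    rw [min_eq_left hlt.2.le, max_eq_right hlt.1.le, sub_self]
  · change |f x - (f x - max (-ε) (min (f x) ε))| ≤ ε
    rw [sub_sub_cancel, abs_le]
    exact ⟨le_max_left _ _, max_le (by linarith) (min_le_right _ _)⟩

lemma integrable_of_tendsto_cocompact {X : Type*} [TopologicalSpace X] [MeasurableSpace X]
    [OpensMeasurableSpace X] {f : X → ℝ} (hf : Continuous f)
    (hf0 : Tendsto f (cocompact X) (nhds 0)) (μ : Measure X) [IsFiniteMeasure μ] :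
    Integrable f μ := by
  let F : ZeroAtInftyContinuousMap X ℝ := ⟨⟨f, hf⟩, hf0⟩
  exact F.toBCF.integrable μ

/-- The Riesz measure of `g ↦ ∫ g dμ` is finite: the mass of a compact set is at most the value of
the functional at a bump function bounded by `1`, hence at most `μ univ`. -/
lemma exists_regular_integral_eq {X : Type*} [TopologicalSpace X] [LocallyCompactSpace X]
    [T2Space X] [MeasurableSpace X] [BorelSpace X] (μ : Measure X) [IsFiniteMeasure μ] :
    ∃ ρ : Measure X, IsFiniteMeasure ρ ∧ ρ.Regular ∧
      ∀ g : CompactlySupportedContinuousMap X ℝ, ∫ x, g x ∂ρ = ∫ x, g x ∂μ := by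
  let Λ := CompactlySupportedContinuousMap.integralPositiveLinearMap μ
  refine ⟨RealRMK.rieszMeasure Λ, ⟨?_⟩, inferInstance, fun g => RealRMK.integral_rieszMeasure Λ g⟩
  refine lt_of_le_of_lt ?_ (ENNReal.ofReal_lt_top (r := μ.real Set.univ))
  rw [isOpen_univ.measure_eq_iSup_isCompact]
  refine iSup₂_le fun K _ => iSup_le fun hK => ?_
  obtain ⟨f, hf1, hf2, hf3⟩ :=
    exists_continuousMap_one_of_isCompact_subset_isOpen hK isOpen_univ (Set.subset_univ K)
  let g : CompactlySupportedContinuousMap X ℝ := ⟨f, hasCompactSupport_def.mpr hf2⟩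
  refine (RealRMK.rieszMeasure_le_of_eq_one Λ (f := g) (fun x => (hf3.2 x).1) hK
    fun x hx => hf1 hx).trans (ENNReal.ofReal_le_ofReal ?_)
  calc Λ g = ∫ x, g x ∂μ := rfl
    _ ≤ ∫ _, (1 : ℝ) ∂μ := integral_mono g.integrable (integrable_const _) fun x => (hf3.2 x).2
    _ = μ.real Set.univ := by simp

lemma integral_eq_of_tendsto_cocompact {X : Type*} [TopologicalSpace X] [T2Space X]
    [MeasurableSpace X] [BorelSpace X] {μ ρ : Measure X} [IsFiniteMeasure μ] [IsFiniteMeasure ρ]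
    (h : ∀ g : CompactlySupportedContinuousMap X ℝ, ∫ x, g x ∂ρ = ∫ x, g x ∂μ)
    {f : X → ℝ} (hf : Continuous f) (hf0 : Tendsto f (cocompact X) (nhds 0)) :
    ∫ x, f x ∂ρ = ∫ x, f x ∂μ := by
  have key : ∀ ε > 0, |∫ x, f x ∂ρ - ∫ x, f x ∂μ| ≤
      ε * (ρ.real Set.univ + μ.real Set.univ) := by
    intro ε hε
    obtain ⟨g, hg⟩ := exists_compactlySupported_abs_sub_le hf hf0 hε
    have aux : ∀ (m : Measure X) [IsFiniteMeasure m],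
        |∫ x, f x ∂m - ∫ x, g x ∂m| ≤ ε * m.real Set.univ := by
      intro m _
      rw [← integral_sub (integrable_of_tendsto_cocompact hf hf0 m) g.integrable]
      have hb : ∀ᵐ x ∂m, ‖f x - g x‖ ≤ ε := .of_forall hg
      simpa using norm_integral_le_of_norm_le_const hb
    have h1 := aux ρ
    have h2 := aux μ
    rw [h g] at h1
    rw [abs_le] at *
    constructor <;> linarith
  have hlim : Tendsto (fun ε : ℝ => ε * (ρ.real Set.univ + μ.real Set.univ))
      (nhdsWithin 0 (Set.Ioi 0)) (nhds 0) := by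
    have : Continuous fun ε : ℝ => ε * (ρ.real Set.univ + μ.real Set.univ) := by fun_prop
    simpa using (this.tendsto 0).mono_left nhdsWithin_le_nhds
  have hle := ge_of_tendsto hlim (eventually_mem_nhdsWithin.mono key)
  exact sub_eq_zero.1 (abs_nonpos_iff.1 hle)

/-- `sInt`, which is defined by the Jordan decomposition, can be computed from any representation
of the signed measure as a difference of finite measures. -/
lemma sInt_eq_of_eq_sub {X : Type*} [MeasurableSpace X] {σ : SignedMeasure X} {α β : Measure X}
    [IsFiniteMeasure α] [IsFiniteMeasure β] (h : σ = α.toSignedMeasure - β.toSignedMeasure)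
    {f : X → ℝ} (hf : ∀ (m : Measure X) [IsFiniteMeasure m], Integrable f m) :
    sInt σ f = ∫ x, f x ∂α - ∫ x, f x ∂β := by
  set P := σ.toJordanDecomposition.posPart with hP
  set N := σ.toJordanDecomposition.negPart with hN
  have hσ : P.toSignedMeasure - N.toSignedMeasure = σ :=
    σ.toSignedMeasure_toJordanDecomposition
  have hm : P + β = α + N := by
    rw [← Measure.toSignedMeasure_eq_toSignedMeasure_iff, Measure.toSignedMeasure_add,
      Measure.toSignedMeasure_add, ← sub_eq_sub_iff_add_eq_add, hσ, h]
  have hi : ∫ x, f x ∂(P + β) = ∫ x, f x ∂(α + N) := by rw [hm]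
  rw [integral_add_measure (hf P) (hf β), integral_add_measure (hf α) (hf N)] at hi
  change ∫ x, f x ∂P - ∫ x, f x ∂N = _
  linarith

/-- If some finite signed Borel measure is not Radon, then some nonzero one annihilates `C₀(X)`. -/
lemma exists_ne_zero_sInt_eq_zero {X : Type*} [TopologicalSpace X] [LocallyCompactSpace X]
    [T2Space X] [MeasurableSpace X] [BorelSpace X]
    (hne : ∃ μ : SignedMeasure X, ¬ IsRadonSigned μ) :
    ∃ σ : SignedMeasure X, σ ≠ 0 ∧ ∀ f : X → ℝ, Continuous f →
      Tendsto f (cocompact X) (nhds 0) → sInt σ f = 0 := by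
  obtain ⟨μ, hμ⟩ := hne
  set P := μ.toJordanDecomposition.posPart
  set N := μ.toJordanDecomposition.negPart
  have hPN : P.toSignedMeasure - N.toSignedMeasure = μ :=
    μ.toSignedMeasure_toJordanDecomposition
  obtain ⟨ρ₁, hfin₁, hreg₁, h₁⟩ := exists_regular_integral_eq P
  obtain ⟨ρ₂, hfin₂, hreg₂, h₂⟩ := exists_regular_integral_eq N
  refine ⟨μ - (ρ₁.toSignedMeasure - ρ₂.toSignedMeasure), fun h0 =>
    hμ ⟨ρ₁, ρ₂, hfin₁, hfin₂, hreg₁, hreg₂, sub_eq_zero.1 h0⟩, fun f hf hf0 => ?_⟩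
  have hrep : μ - (ρ₁.toSignedMeasure - ρ₂.toSignedMeasure) =
      (P + ρ₂).toSignedMeasure - (N + ρ₁).toSignedMeasure := by
    rw [Measure.toSignedMeasure_add, Measure.toSignedMeasure_add]
    have hab : ∀ a b c d m : SignedMeasure X, a - b = m → m - (c - d) = a + d - (b + c) := by
      rintro a b c d _ rfl
      abel
    exact hab _ _ _ _ _ hPN
  have hint : ∀ (m : Measure X) [IsFiniteMeasure m], Integrable f m :=
    fun m _ => integrable_of_tendsto_cocompact hf hf0 m
  rw [sInt_eq_of_eq_sub hrep hint, integral_add_measure (hint P) (hint ρ₂),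
    integral_add_measure (hint N) (hint ρ₁), integral_eq_of_tendsto_cocompact h₁ hf hf0,
    integral_eq_of_tendsto_cocompact h₂ hf hf0]
  ring

/-- **Theorem (no strictly integrally positive definite `C₀`-kernel).** Let `(X,τ)` be a
locally compact Hausdorff space for which the finite signed Radon measures form a proper
subset of all finite signed Borel measures. Then no `C₀(X)`-kernel (a bounded continuous
kernel whose RKHS `H`, presented via the feature map `φ`, consists of functions in `C₀(X)`)
is strictly integrally positive definite with respect to `ℳ(X)`. -/
theorem no_sipd_kernel_of_radon_ne_borel
    {X : Type*} [TopologicalSpace X] [LocallyCompactSpace X] [T2Space X]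
    [MeasurableSpace X] [BorelSpace X]
    (hne : ∃ μ : SignedMeasure X, ¬ IsRadonSigned μ) :
    ∀ {H : Type*} [NormedAddCommGroup H] [InnerProductSpace ℝ H],
      ∀ (k : X → X → ℝ) (φ : X → H),
        (∀ x y, k x y = ⟪φ x, φ y⟫_ℝ) →
        Continuous (Function.uncurry k) →
        (∃ C : ℝ, ∀ x y, |k x y| ≤ C) →
        (Submodule.span ℝ (Set.range φ)).topologicalClosure = ⊤ →
        (∀ f : H, Continuous (fun x => ⟪f, φ x⟫_ℝ) ∧
          Tendsto (fun x => ⟪f, φ x⟫_ℝ) (cocompact X) (nhds 0)) →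
        ¬ ∀ μ : SignedMeasure X, μ ≠ 0 →
            0 < sInt μ (fun x => sInt μ (fun y => k x y)) := by
  intro H _ _ k φ hk _ _ _ hC₀ hpos
  obtain ⟨σ, hσ, hσ0⟩ := exists_ne_zero_sInt_eq_zero hne
  have hinner : ∀ x, sInt σ (fun y => k x y) = 0 := fun x => by
    simp only [hk]
    exact hσ0 _ (hC₀ (φ x)).1 (hC₀ (φ x)).2
  have := hpos σ hσ
  simp only [hinner] at this
  simp [sInt] at this

end
end

section
/- Let (X,τ) be a locally compact Hausdorff space and k a C₀(X)-kernel. Then k is strictly integrally positive definite with respect to the space ℳ_R(X) of finite signed Radon measures if and only if k is universal. -/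
/-!
The link between the two properties is duality. For a finite signed measure `μ`, the functional
`f ↦ ∫ ⟪f, φ x⟫ dμ(x)` on the completion of `H` is bounded, hence represented by a vector `m` (the
mean embedding of `μ`), and the double integral of `k` against `μ` is `‖m‖²`
(`exists_meanEmbedding`). So the double integral is always nonnegative, and it vanishes exactly
when `μ` annihilates every function `x ↦ ⟪f, φ x⟫` with `f ∈ H`. Strict integral positive
definiteness thus says that no nonzero signed Radon measure annihilates `H`.

By Hahn-Banach, density of `H` in `C₀(X)` says that no nonzero bounded functional on `C₀(X)`
annihilates `H`. The two statements agree because bounded functionals on `C₀(X)` are signed Radon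
measures: existence is `exists_regular_sub`, uniqueness is `eq_zero_of_sInt_eq_zero`. Existence is
reduced to the Riesz-Markov-Kakutani theorem for positive functionals on `C_c(X, ℝ≥0)` by splitting
the functional into its positive and negative parts (`exists_pos_sub_pos`). The two representing
measures are finite because the parts are bounded, and the formula extends from `C_c(X)` to `C₀(X)`
by density.

The functional is represented in the completion of `H`, rather than by the Bochner integral
`∫ φ dμ`, since `X` need not be second countable and `H` need not be complete.
-/

open MeasureTheory Filter
open scoped InnerProductSpace ZeroAtInfty

noncomputable section

open CompactlySupportedContinuousMap
open scoped NNReal ENNReal CompactlySupported BoundedContinuousFunction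

/-! ### Jordan decomposition of a bounded functional -/

/-- The positive part of an additive functional `lam` on the cone `C_c(X, ℝ≥0)`, given by the
Riesz formula `f ↦ sup {lam g | 0 ≤ g ≤ f}`. -/
def posPartFun {X : Type*} [TopologicalSpace X] (lam : C_c(X, ℝ≥0) →ₗ[ℝ≥0] ℝ)
    (f : C_c(X, ℝ≥0)) : ℝ :=
  sSup (lam '' {g | g ≤ f})

section Jordan

variable {X : Type*} [TopologicalSpace X] {lam : C_c(X, ℝ≥0) →ₗ[ℝ≥0] ℝ} {C : ℝ}

lemma exists_forall_le (f : C_c(X, ℝ≥0)) : ∃ B : ℝ≥0, ∀ x, f x ≤ B := by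
  obtain ⟨B, hB⟩ := (f.hasCompactSupport.isCompact_range f.continuous).bddAbove
  exact ⟨B, fun x => hB ⟨x, rfl⟩⟩

variable (hlam : ∀ (f : C_c(X, ℝ≥0)) (B : ℝ≥0), (∀ x, f x ≤ B) → |lam f| ≤ C * B)

include hlam

lemma posPartFun_bddAbove (f : C_c(X, ℝ≥0)) : BddAbove (lam '' {g | g ≤ f}) := by
  obtain ⟨B, hB⟩ := exists_forall_le f
  refine ⟨C * B, ?_⟩
  rintro _ ⟨g, hg, rfl⟩
  exact (le_abs_self _).trans (hlam g B fun x => (hg x).trans (hB x))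

lemma le_posPartFun {f g : C_c(X, ℝ≥0)} (h : g ≤ f) : lam g ≤ posPartFun lam f :=
  le_csSup (posPartFun_bddAbove hlam f) ⟨g, h, rfl⟩

omit hlam in
lemma posPartFun_le {f : C_c(X, ℝ≥0)} {b : ℝ} (h : ∀ g ≤ f, lam g ≤ b) :
    posPartFun lam f ≤ b := by
  refine csSup_le ⟨_, f, le_refl f, rfl⟩ ?_
  rintro _ ⟨g, hg, rfl⟩
  exact h g hg

lemma posPartFun_nonneg (f : C_c(X, ℝ≥0)) : 0 ≤ posPartFun lam f := by
  have h := le_posPartFun hlam (f := f) (g := 0) (fun x => by simp)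
  simpa using h

lemma posPartFun_add (f₁ f₂ : C_c(X, ℝ≥0)) :
    posPartFun lam (f₁ + f₂) = posPartFun lam f₁ + posPartFun lam f₂ := by
  apply le_antisymm
  · refine posPartFun_le fun g hg => ?_
    -- Riesz decomposition: `g = g ⊓ f₁ + h` with `h ≤ f₂`.
    obtain ⟨h, hh⟩ := CompactlySupportedContinuousMap.exists_add_of_le
      (inf_le_left : g ⊓ f₁ ≤ g)
    have hle : h ≤ f₂ := by
      intro x
      have h1 : min (g x) (f₁ x) + h x = g x := by
        have := DFunLike.congr_fun hh x
        simpa using this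
      have h2 : g x ≤ f₁ x + f₂ x := by simpa using hg x
      rcases le_total (g x) (f₁ x) with h3 | h3
      · rw [min_eq_left h3] at h1
        have : h x = 0 := by simpa using h1
        show h x ≤ f₂ x
        rw [this]; exact zero_le
      · rw [min_eq_right h3] at h1
        rw [← h1] at h2
        exact le_of_add_le_add_left h2
    rw [← hh, map_add]
    exact add_le_add (le_posPartFun hlam inf_le_right) (le_posPartFun hlam hle)
  · rw [← le_sub_iff_add_le]
    refine posPartFun_le fun g₁ h₁ => ?_
    rw [le_sub_comm]
    refine posPartFun_le fun g₂ h₂ => ?_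
    rw [le_sub_iff_add_le, add_comm, ← map_add]
    refine le_posPartFun hlam fun x => ?_
    exact add_le_add (h₁ x) (h₂ x)

lemma posPartFun_smul (c : ℝ≥0) (f : C_c(X, ℝ≥0)) :
    posPartFun lam (c • f) = c * posPartFun lam f := by
  rcases eq_or_ne c 0 with rfl | hc
  · have h := posPartFun_add hlam 0 0
    simp only [add_zero] at h
    have h0 : posPartFun lam 0 = 0 := by linarith
    simpa using h0
  apply le_antisymm
  · refine posPartFun_le fun g hg => ?_
    have h1 : lam (c⁻¹ • g) ≤ posPartFun lam f := by
      refine le_posPartFun hlam fun x => ?_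
      have h2 : g x ≤ c * f x := by simpa using hg x
      have h3 : c⁻¹ * g x ≤ f x := by
        rw [inv_mul_le_iff₀ (pos_iff_ne_zero.2 hc)]; exact h2
      simpa using h3
    have h2 : lam g = c * lam (c⁻¹ • g) := by
      have : g = c • (c⁻¹ • g) := by rw [smul_smul, mul_inv_cancel₀ hc, one_smul]
      conv_lhs => rw [this, map_smul]
      rfl
    rw [h2]
    exact mul_le_mul_of_nonneg_left h1 c.2
  · have hc' : (0 : ℝ) < c := NNReal.coe_pos.2 (pos_iff_ne_zero.2 hc)
    rw [← le_div_iff₀' hc']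
    refine posPartFun_le fun g hg => ?_
    rw [le_div_iff₀' hc']
    have h1 : lam (c • g) = c * lam g := by rw [map_smul]; rfl
    rw [← h1]
    refine le_posPartFun hlam fun x => ?_
    have h2 : c * g x ≤ c * f x := mul_le_mul_right (hg x) c
    simpa using h2

/-- **Jordan decomposition**: a functional on the cone `C_c(X, ℝ≥0)` that is bounded for the
supremum norm is a difference of two bounded positive functionals. -/
lemma exists_pos_sub_pos :
    ∃ P N : C_c(X, ℝ≥0) →ₗ[ℝ≥0] ℝ≥0, (∀ f, lam f = P f - N f) ∧
      ∀ (f : C_c(X, ℝ≥0)) (B : ℝ≥0), (∀ x, f x ≤ B) → P f ≤ C * B ∧ N f ≤ C * B := by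
  refine ⟨
    { toFun := fun f => ⟨posPartFun lam f, posPartFun_nonneg hlam f⟩
      map_add' := fun f g => NNReal.eq (posPartFun_add hlam f g)
      map_smul' := fun c f => NNReal.eq (posPartFun_smul hlam c f) },
    { toFun := fun f => ⟨posPartFun lam f - lam f, sub_nonneg.2 (le_posPartFun hlam le_rfl)⟩
      map_add' := fun f g => NNReal.eq ?_
      map_smul' := fun c f => NNReal.eq ?_ }, ?_, ?_⟩
  · show posPartFun lam (f + g) - lam (f + g) = _
    rw [posPartFun_add hlam, map_add]
    show _ = (posPartFun lam f - lam f) + (posPartFun lam g - lam g)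
    ring
  · show posPartFun lam (c • f) - lam (c • f) = c * (posPartFun lam f - lam f)
    rw [posPartFun_smul hlam, map_smul]
    show _ - c * lam f = _
    ring
  · intro f
    show lam f = posPartFun lam f - (posPartFun lam f - lam f)
    ring
  · intro f B hB
    constructor
    · refine posPartFun_le fun g hg => ?_
      exact (le_abs_self _).trans (hlam g B fun x => (hg x).trans (hB x))
    · show posPartFun lam f - lam f ≤ C * B
      rw [sub_le_iff_le_add]
      refine posPartFun_le fun g hg => ?_
      obtain ⟨h, rfl⟩ := CompactlySupportedContinuousMap.exists_add_of_le hg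
      have h1 : |lam h| ≤ C * B := hlam h B fun x => by
        refine le_trans ?_ (hB x)
        show h x ≤ g x + h x
        exact le_add_self
      rw [map_add]
      have := neg_abs_le (lam h)
      linarith

end Jordan

/-! ### Riesz representation of bounded functionals on `C₀(X, ℝ)` -/

section Riesz

variable {X : Type*} [TopologicalSpace X] [LocallyCompactSpace X] [T2Space X]
  [MeasurableSpace X] [BorelSpace X]

lemma isFiniteMeasure_rieszMeasure {P : C_c(X, ℝ≥0) →ₗ[ℝ≥0] ℝ≥0} {C : ℝ}
    (hP : ∀ (f : C_c(X, ℝ≥0)) (B : ℝ≥0), (∀ x, f x ≤ B) → P f ≤ C * B) :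
    IsFiniteMeasure (NNRealRMK.rieszMeasure P) := by
  refine ⟨lt_of_le_of_lt ?_ (ENNReal.ofReal_lt_top (r := C))⟩
  rw [isOpen_univ.measure_eq_iSup_isCompact]
  refine iSup₂_le fun K _ => iSup_le fun hK => ?_
  obtain ⟨f, hf1, -, hfc, hf01⟩ :=
    exists_continuous_one_zero_of_isCompact hK isClosed_empty (Set.disjoint_empty K)
  let F : C_c(X, ℝ≥0) := nnrealPart ⟨f, hfc⟩
  have hFx : ∀ x, F x = Real.toNNReal (f x) := fun x => rfl
  calc NNRealRMK.rieszMeasure P K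
      = ∫⁻ x in K, 1 ∂(NNRealRMK.rieszMeasure P) := by simp
    _ ≤ ∫⁻ x in K, F x ∂(NNRealRMK.rieszMeasure P) := by
        refine setLIntegral_mono' hK.measurableSet fun x hx => ?_
        rw [hFx, hf1 hx]
        simp
    _ ≤ ∫⁻ x, F x ∂(NNRealRMK.rieszMeasure P) := setLIntegral_le_lintegral _ _
    _ = P F := NNRealRMK.lintegral_rieszMeasure P F
    _ ≤ ENNReal.ofReal C := by
        rw [← ENNReal.ofReal_coe_nnreal]
        apply ENNReal.ofReal_le_ofReal
        have := hP F 1 fun x => by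
          rw [hFx]
          exact Real.toNNReal_le_one.2 (hf01 x).2
        simpa using this

/-- The inclusion of the cone `C_c(X, ℝ≥0)` into `C₀(X, ℝ)`. -/
def toC0 (f : C_c(X, ℝ≥0)) : C₀(X, ℝ) where
  toFun x := f x
  continuous_toFun := NNReal.continuous_coe.comp f.continuous
  zero_at_infty' :=
    HasCompactSupport.is_zero_at_infty (f := fun x => (f x : ℝ))
      (f.hasCompactSupport.comp_left (g := ((↑) : ℝ≥0 → ℝ)) rfl)

omit [LocallyCompactSpace X] [T2Space X] [MeasurableSpace X] [BorelSpace X] in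
lemma norm_C0_le {g : C₀(X, ℝ)} {B : ℝ} (hB : 0 ≤ B) (h : ∀ x, |g x| ≤ B) : ‖g‖ ≤ B := by
  rw [← ZeroAtInftyContinuousMap.norm_toBCF_eq_norm]
  exact (BoundedContinuousFunction.norm_le hB).2 h

omit [LocallyCompactSpace X] [MeasurableSpace X] [BorelSpace X] in
/-- Differences of nonnegative compactly supported functions are dense in `C₀(X, ℝ)`: truncate `g`
to `(g - ε)⁺ - (-g - ε)⁺`. -/
lemma exists_toC0_sub_approx (g : C₀(X, ℝ)) {ε : ℝ} (hε : 0 < ε) :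
    ∃ f₁ f₂ : C_c(X, ℝ≥0), ‖g - (toC0 f₁ - toC0 f₂)‖ ≤ ε := by
  have key : ∀ g : C₀(X, ℝ), ∃ f : C_c(X, ℝ≥0), ∀ x, f x = Real.toNNReal (g x - ε) := by
    intro g
    have h1 : ∀ᶠ x in cocompact X, g x < ε :=
      (ZeroAtInftyContinuousMapClass.zero_at_infty g).eventually (gt_mem_nhds hε)
    obtain ⟨K, hK, hKs⟩ := mem_cocompact.1 h1
    refine ⟨⟨⟨fun x => Real.toNNReal (g x - ε), by fun_prop⟩, ?_⟩, fun x => rfl⟩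
    refine HasCompactSupport.intro hK fun x hx => ?_
    have : g x < ε := hKs hx
    exact Real.toNNReal_of_nonpos (by linarith)
  obtain ⟨f₁, h₁⟩ := key g
  obtain ⟨f₂, h₂⟩ := key (-g)
  refine ⟨f₁, f₂, norm_C0_le hε.le fun x => ?_⟩
  show |g x - ((f₁ x : ℝ) - f₂ x)| ≤ ε
  rw [h₁, h₂, Real.coe_toNNReal', Real.coe_toNNReal', ZeroAtInftyContinuousMap.neg_apply, abs_le]
  rcases max_cases (g x - ε) 0 with ⟨e1, _⟩ | ⟨e1, _⟩ <;>
  rcases max_cases (-g x - ε) 0 with ⟨e2, _⟩ | ⟨e2, _⟩ <;> rw [e1, e2] <;> constructor <;> linarith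

/-- Integration against a finite measure, as a continuous functional on bounded continuous
functions. -/
def intL (ρ : Measure X) [IsFiniteMeasure ρ] : (X →ᵇ ℝ) →L[ℝ] ℝ :=
  LinearMap.mkContinuous
    { toFun := fun f => ∫ x, f x ∂ρ
      map_add' := fun f g => integral_add (f.integrable ρ) (g.integrable ρ)
      map_smul' := fun c _ => integral_const_mul c _ }
    (ρ.real Set.univ) (fun f => f.norm_integral_le_mul_norm ρ)

/-- The isometric inclusion of `C₀(X, ℝ)` into the bounded continuous functions. -/
def toBCFL : C₀(X, ℝ) →L[ℝ] (X →ᵇ ℝ) :=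
  LinearMap.mkContinuous
    { toFun := fun f => f.toBCF
      map_add' := fun _ _ => rfl
      map_smul' := fun _ _ => rfl } 1 (fun f => (one_mul ‖f‖).ge)

/-- **Riesz representation** for `C₀(X, ℝ)`: every bounded functional is the difference of the
integrals against two finite regular Borel measures. -/
lemma exists_regular_sub (Λ : C₀(X, ℝ) →L[ℝ] ℝ) :
    ∃ (ρ₁ ρ₂ : Measure X) (_ : IsFiniteMeasure ρ₁) (_ : IsFiniteMeasure ρ₂),
      ρ₁.Regular ∧ ρ₂.Regular ∧ ∀ g : C₀(X, ℝ), Λ g = (∫ x, g x ∂ρ₁) - ∫ x, g x ∂ρ₂ := by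
  let lam : C_c(X, ℝ≥0) →ₗ[ℝ≥0] ℝ :=
    { toFun := fun f => Λ (toC0 f)
      map_add' := fun f g => by rw [← map_add]; rfl
      map_smul' := fun c f => by
        show Λ (toC0 (c • f)) = (c : ℝ) • Λ (toC0 f)
        rw [← map_smul]; rfl }
  have hlam : ∀ (f : C_c(X, ℝ≥0)) (B : ℝ≥0), (∀ x, f x ≤ B) → |lam f| ≤ ‖Λ‖ * B := by
    intro f B hB
    refine (Λ.le_opNorm (toC0 f)).trans ?_
    refine mul_le_mul_of_nonneg_left (norm_C0_le B.2 fun x => ?_) (norm_nonneg _)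
    show |(f x : ℝ)| ≤ B
    rw [NNReal.abs_eq]
    exact_mod_cast hB x
  obtain ⟨P, N, hPN, hbd⟩ := exists_pos_sub_pos hlam
  have i₁ : IsFiniteMeasure (NNRealRMK.rieszMeasure P) :=
    isFiniteMeasure_rieszMeasure fun f B hB => (hbd f B hB).1
  have i₂ : IsFiniteMeasure (NNRealRMK.rieszMeasure N) :=
    isFiniteMeasure_rieszMeasure fun f B hB => (hbd f B hB).2
  refine ⟨_, _, i₁, i₂, inferInstance, inferInstance, ?_⟩
  let J : C₀(X, ℝ) →L[ℝ] ℝ :=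
    (intL (NNRealRMK.rieszMeasure P) - intL (NNRealRMK.rieszMeasure N)).comp toBCFL
  have hJ : ∀ f : C_c(X, ℝ≥0), Λ (toC0 f) = J (toC0 f) := by
    intro f
    refine (hPN f).trans ?_
    rw [← NNRealRMK.integral_rieszMeasure P f, ← NNRealRMK.integral_rieszMeasure N f]
    rfl
  intro g
  show Λ g = J g
  rw [← sub_eq_zero]
  show (Λ - J) g = 0
  refine closure_minimal (s := {g : C₀(X, ℝ) | ∃ f₁ f₂ : C_c(X, ℝ≥0), g = toC0 f₁ - toC0 f₂})
    (t := {g | (Λ - J) g = 0}) ?_ (isClosed_eq (Λ - J).continuous continuous_const) ?_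
  · rintro _ ⟨f₁, f₂, rfl⟩
    simp only [Set.mem_ofPred_eq, map_sub, _root_.sub_apply, hJ, sub_self]
  · rw [Metric.mem_closure_iff]
    intro ε hε
    obtain ⟨f₁, f₂, h⟩ := exists_toC0_sub_approx g (half_pos hε)
    exact ⟨_, ⟨f₁, f₂, rfl⟩, by rw [dist_eq_norm]; linarith⟩

/-! ### Integration against a signed measure -/

/-- `sInt μ` as a continuous functional on bounded continuous functions. -/
def sIntL (μ : SignedMeasure X) : (X →ᵇ ℝ) →L[ℝ] ℝ :=
  intL μ.toJordanDecomposition.posPart - intL μ.toJordanDecomposition.negPart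

omit [LocallyCompactSpace X] [T2Space X] in
/-- `sInt` may be computed from any representation of `μ` as a difference of finite measures, not
only the Jordan decomposition. -/
lemma sInt_sub (ρ₁ ρ₂ : Measure X) [IsFiniteMeasure ρ₁] [IsFiniteMeasure ρ₂] (f : X →ᵇ ℝ) :
    sInt (ρ₁.toSignedMeasure - ρ₂.toSignedMeasure) f = (∫ x, f x ∂ρ₁) - ∫ x, f x ∂ρ₂ := by
  set μ := ρ₁.toSignedMeasure - ρ₂.toSignedMeasure with hμ
  have h := μ.toSignedMeasure_toJordanDecomposition
  rw [JordanDecomposition.toSignedMeasure] at h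
  have h2 : μ.toJordanDecomposition.posPart + ρ₂ = ρ₁ + μ.toJordanDecomposition.negPart := by
    rw [← Measure.toSignedMeasure_eq_toSignedMeasure_iff, Measure.toSignedMeasure_add,
      Measure.toSignedMeasure_add]
    rw [sub_eq_iff_eq_add] at h
    rw [h, hμ]
    abel
  have h3 := congrArg (fun ρ : Measure X => ∫ x, f x ∂ρ) h2
  simp only [integral_add_measure (f.integrable _) (f.integrable _)] at h3
  rw [sInt]
  linarith

/-- A signed Radon measure annihilating `C₀(X, ℝ)` vanishes. -/
lemma eq_zero_of_sInt_eq_zero {μ : SignedMeasure X} (hμ : IsRadonSigned μ)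
    (h : ∀ g : C₀(X, ℝ), sInt μ g = 0) : μ = 0 := by
  obtain ⟨ρ₁, ρ₂, i₁, i₂, r₁, r₂, rfl⟩ := hμ
  have : ρ₁ = ρ₂ := by
    refine Measure.ext_of_integral_eq_on_compactlySupported fun f => ?_
    have h1 := (sInt_sub ρ₁ ρ₂ (f : C₀(X, ℝ)).toBCF).symm.trans (h f)
    exact sub_eq_zero.1 h1
  subst this
  exact sub_self _

end Riesz

/-! ### The kernel mean embedding -/

section Embedding

open UniformSpace

variable {X : Type*} [TopologicalSpace X] [MeasurableSpace X] [BorelSpace X]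
  {H : Type*} [NormedAddCommGroup H] [InnerProductSpace ℝ H] {k : X → X → ℝ} {φ : X → H}

omit [MeasurableSpace X] [BorelSpace X] in
/-- Continuity of the kernel makes the feature map norm continuous, since
`‖φ x - φ y‖² = k x x - 2 k x y + k y y`. -/
lemma continuous_feature (hk : ∀ x y, k x y = ⟪φ x, φ y⟫_ℝ)
    (hcont : Continuous (Function.uncurry k)) : Continuous φ := by
  have hk2 : ∀ x y, ‖φ x - φ y‖ ^ 2 = k x x - 2 * k x y + k y y := by
    intro x y
    rw [norm_sub_sq_real, hk, hk, hk, real_inner_self_eq_norm_sq, real_inner_self_eq_norm_sq]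
  rw [continuous_iff_continuousAt]
  intro y
  have hc : ∀ a b : X → X, Continuous a → Continuous b → Continuous fun x => k (a x) (b x) :=
    fun a b ha hb => hcont.comp (ha.prodMk hb)
  have h1 : Continuous fun x => √(k x x - 2 * k x y + k y y) :=
    (((hc _ _ continuous_id continuous_id).sub
      ((hc _ _ continuous_id continuous_const).const_mul 2)).add continuous_const).sqrt
  rw [ContinuousAt, tendsto_iff_norm_sub_tendsto_zero]
  have h2 := h1.tendsto y
  have h3 : √(k y y - 2 * k y y + k y y) = 0 := by
    rw [show k y y - 2 * k y y + k y y = 0 by ring, Real.sqrt_zero]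
  rw [h3] at h2
  refine h2.congr fun x => ?_
  rw [← hk2, Real.sqrt_sq (norm_nonneg _)]

/-- The mean embedding `m` of a finite signed measure `μ`: the Riesz representative, in the
completion of `H`, of the functional `f ↦ ∫ ⟪f, φ x⟫ dμ(x)`. The double integral of the kernel
against `μ` equals `‖m‖²`. -/
lemma exists_meanEmbedding (hk : ∀ x y, k x y = ⟪φ x, φ y⟫_ℝ)
    (hcont : Continuous (Function.uncurry k)) (hbdd : ∃ C : ℝ, ∀ x y, |k x y| ≤ C)
    (μ : SignedMeasure X) :
    ∃ m : Completion H, (∀ f : H, sInt μ (fun x => ⟪f, φ x⟫_ℝ) = ⟪m, (f : Completion H)⟫_ℝ) ∧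
      sInt μ (fun x => sInt μ (fun y => k x y)) = ‖m‖ ^ 2 := by
  obtain ⟨C, hC⟩ := hbdd
  have hφ : Continuous φ := continuous_feature hk hcont
  have hΦ : Continuous fun x => (φ x : Completion H) := (Completion.continuous_coe H).comp hφ
  have hn : ∀ x, ‖(φ x : Completion H)‖ ≤ √C := by
    intro x
    rw [Completion.norm_coe]
    apply Real.le_sqrt_of_sq_le
    rw [← real_inner_self_eq_norm_sq, ← hk]
    exact (le_abs_self _).trans (hC x x)
  have hb : ∀ (f : Completion H) x, ‖⟪f, (φ x : Completion H)⟫_ℝ‖ ≤ √C * ‖f‖ := fun f x =>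
    (norm_inner_le_norm _ _).trans <| by
      rw [mul_comm]; exact mul_le_mul_of_nonneg_right (hn x) (norm_nonneg _)
  let F : Completion H →L[ℝ] (X →ᵇ ℝ) := LinearMap.mkContinuous
    { toFun := fun f => BoundedContinuousFunction.ofNormedAddCommGroup
        (fun x => ⟪f, (φ x : Completion H)⟫_ℝ) (continuous_const.inner hΦ) _ (hb f)
      map_add' := fun f g => by
        ext x
        exact inner_add_left (𝕜 := ℝ) f g (φ x : Completion H)
      map_smul' := fun c f => by
        ext x
        exact real_inner_smul_left f (φ x : Completion H) c }
    (√C) fun f => by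
      exact (BoundedContinuousFunction.norm_le (by positivity)).2 (hb f)
  let m : Completion H := (InnerProductSpace.toDual ℝ (Completion H)).symm ((sIntL μ).comp F)
  have hm : ∀ f : Completion H, sInt μ (fun x => ⟪f, (φ x : Completion H)⟫_ℝ) = ⟪m, f⟫_ℝ := by
    intro f
    rw [InnerProductSpace.toDual_symm_apply]
    rfl
  refine ⟨m, fun f => ?_, ?_⟩
  · rw [← hm]
    simp only [Completion.inner_coe]
  · have h1 : ∀ x, sInt μ (fun y => k x y) = ⟪m, (φ x : Completion H)⟫_ℝ := by
      intro x
      rw [← hm]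
      simp only [Completion.inner_coe, hk]
    simp only [h1]
    rw [hm, real_inner_self_eq_norm_sq]

end Embedding

/-- **Theorem (universal ↔ strictly integrally positive definite on Radon measures).**
Let `(X,τ)` be a locally compact Hausdorff space and `k` a `C₀(X)`-kernel (a bounded
continuous kernel whose RKHS `H`, presented via the feature map `φ`, consists of functions
in `C₀(X)`). Then `k` is strictly integrally positive definite with respect to `ℳ_R(X)` if
and only if `k` is universal, i.e. `H` is dense in `C₀(X)` in the supremum norm. -/
theorem sipd_radon_iff_universal
    {X : Type*} [TopologicalSpace X] [LocallyCompactSpace X] [T2Space X]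
    [MeasurableSpace X] [BorelSpace X]
    {H : Type*} [NormedAddCommGroup H] [InnerProductSpace ℝ H]
    (k : X → X → ℝ) (φ : X → H)
    (hk : ∀ x y, k x y = ⟪φ x, φ y⟫_ℝ)
    (hcont : Continuous (Function.uncurry k))
    (hbdd : ∃ C : ℝ, ∀ x y, |k x y| ≤ C)
    (hdense : (Submodule.span ℝ (Set.range φ)).topologicalClosure = ⊤)
    (hC0 : ∀ f : H, Continuous (fun x => ⟪f, φ x⟫_ℝ) ∧
      Tendsto (fun x => ⟪f, φ x⟫_ℝ) (cocompact X) (nhds 0)) :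
    (∀ μ : SignedMeasure X, IsRadonSigned μ → μ ≠ 0 →
        0 < sInt μ (fun x => sInt μ (fun y => k x y)))
      ↔ (∀ g : C₀(X, ℝ), ∀ ε > (0 : ℝ), ∃ f : H, ∀ x, |g x - ⟪f, φ x⟫_ℝ| ≤ ε) := by
  have hcd : ∀ m : UniformSpace.Completion H,
      (∀ f : H, ⟪m, (f : UniformSpace.Completion H)⟫_ℝ = 0) → m = 0 := by
    intro m hm
    have h : ∀ f : UniformSpace.Completion H, ⟪m, f⟫_ℝ = 0 := fun f =>
      UniformSpace.Completion.induction_on f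
        (isClosed_eq (continuous_const.inner continuous_id) continuous_const) hm
    exact inner_self_eq_zero.1 (h m)
  let E : H →ₗ[ℝ] C₀(X, ℝ) :=
    { toFun := fun f => ⟨⟨fun x => ⟪f, φ x⟫_ℝ, (hC0 f).1⟩, (hC0 f).2⟩
      map_add' := fun f g => by
        ext x
        exact inner_add_left _ _ _
      map_smul' := fun c f => by
        ext x
        exact real_inner_smul_left _ _ _ }
  have hE : ∀ f x, E f x = ⟪f, φ x⟫_ℝ := fun f x => rfl
  constructor
  · intro hpos
    have hclos : ∀ g : C₀(X, ℝ), g ∈ E.range.topologicalClosure := by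
      by_contra! hcon
      obtain ⟨g, hg⟩ := hcon
      obtain ⟨Λ, u, hu, hug⟩ := geometric_hahn_banach_closed_point
        E.range.topologicalClosure.convex E.range.isClosed_topologicalClosure hg
      -- A functional bounded above on a subspace vanishes on it.
      have hΛ : ∀ f, Λ (E f) = 0 := by
        intro f
        by_contra hne
        have h1 := hu (E ((u / Λ (E f)) • f))
          (E.range.le_topologicalClosure (LinearMap.mem_range_self E _))
        rw [map_smul, map_smul, smul_eq_mul, div_mul_cancel₀ _ hne] at h1
        exact lt_irrefl _ h1
      obtain ⟨ρ₁, ρ₂, i₁, i₂, r₁, r₂, hρ⟩ := exists_regular_sub Λ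
      set μ := ρ₁.toSignedMeasure - ρ₂.toSignedMeasure with hμ
      have hμΛ : ∀ g : C₀(X, ℝ), sInt μ g = Λ g := fun g =>
        (sInt_sub ρ₁ ρ₂ g.toBCF).trans (hρ g).symm
      have hne : μ ≠ 0 := by
        intro h0
        have h1 : Λ g = 0 := by
          rw [← hμΛ, h0, sInt, SignedMeasure.toJordanDecomposition_zero]
          simp
        have h2 := hu 0 (Submodule.zero_mem _)
        rw [map_zero] at h2
        linarith
      have hq := hpos μ ⟨ρ₁, ρ₂, i₁, i₂, r₁, r₂, hμ⟩ hne
      obtain ⟨m, hm, hmq⟩ := exists_meanEmbedding hk hcont hbdd μ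
      have hm0 : m = 0 := hcd m fun f => by
        rw [← hm]
        exact (hμΛ (E f)).trans (hΛ f)
      rw [hmq, hm0] at hq
      simp at hq
    intro g ε hε
    obtain ⟨_, ⟨f, rfl⟩, hf⟩ := Metric.mem_closure_iff.1 (hclos g) ε hε
    refine ⟨f, fun x => ?_⟩
    rw [← hE, ← Real.dist_eq]
    refine le_trans ?_ hf.le
    rw [← ZeroAtInftyContinuousMap.dist_toBCF_eq_dist]
    exact BoundedContinuousFunction.dist_coe_le_dist (f := g.toBCF) (g := (E f).toBCF) x
  · intro huniv μ hμ hne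
    obtain ⟨m, hm, hmq⟩ := exists_meanEmbedding hk hcont hbdd μ
    rw [hmq]
    by_contra hq
    have hm0 : m = 0 := by
      by_contra h
      exact hq (pow_pos (norm_pos_iff.2 h) 2)
    refine hne (eq_zero_of_sInt_eq_zero hμ fun g => ?_)
    let L : C₀(X, ℝ) →L[ℝ] ℝ := (sIntL μ).comp toBCFL
    refine closure_minimal (s := Set.range E) (t := {g | L g = 0}) ?_
      (isClosed_eq L.continuous continuous_const) (?_ : g ∈ _)
    · rintro _ ⟨f, rfl⟩
      refine (hm f).trans ?_
      rw [hm0, inner_zero_left]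
    · rw [Metric.mem_closure_iff]
      intro ε hε
      obtain ⟨f, hf⟩ := huniv g (ε / 2) (half_pos hε)
      refine ⟨E f, ⟨f, rfl⟩, ?_⟩
      rw [dist_eq_norm]
      have := norm_C0_le (g := g - E f) (half_pos hε).le hf
      linarith

end
end

section
/- For a compact Hausdorff topological space (X,τ), the following statements are equivalent: (i) there exists a universal kernel on X; (ii) there exists a continuous characteristic kernel on X; (iii) X is metrizable. If these statements hold, then (X,τ) is a compact Polish space and every finite signed Borel measure on X is a Radon measure, i.e. ℳ_R(X) = ℳ(X). -/
/-!
A continuous kernel has a continuous feature map `φ`, since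
`‖φ x - φ y‖² = k(x,x) - 2 k(x,y) + k(y,y)`. If the kernel is universal, then `φ` is injective
because `C(X)` separates points; if it is characteristic, then `φ` is injective because the
embedding separates Dirac measures. An injective continuous map from a compact space to a metric
space is an embedding, so `X` is metrizable (`KernelRKHS.metrizableSpace`).

Conversely, if `X` is compact and metrizable, then `C(X)` is separable. For a dense sequence `fₙ`
and `gₙ = 2⁻ⁿ fₙ / (1 + ‖fₙ‖)`, the feature map `x ↦ (gₙ x)ₙ` into `ℓ²` has a continuous kernel
whose RKHS contains every `fₙ`, so the kernel is universal (`exists_universal_complete`).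
For a universal kernel with complete RKHS the mean embedding determines the integrals of all
continuous functions, hence the probability measure (`KernelRKHS.Universal.characteristic`).
-/

open scoped InnerProductSpace

/-- A kernel on `X` together with its RKHS, presented via the canonical feature map:
`H` is a real Hilbert space, `φ : X → H` is the feature map (so the kernel is
`k(x,y) = ⟪φ x, φ y⟫`), and `H` is generated by the feature vectors. -/
structure KernelRKHS (X : Type*) where
  /-- the RKHS -/
  H : Type*
  [ngroup : NormedAddCommGroup H]
  [ipspace : InnerProductSpace ℝ H]
  /-- the canonical feature map `x ↦ k(·,x)` -/
  φ : X → H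
  dense : (Submodule.span ℝ (Set.range φ)).topologicalClosure = ⊤

attribute [instance] KernelRKHS.ngroup KernelRKHS.ipspace

open MeasureTheory

noncomputable section

/-- The kernel associated to the data `K`. -/
def KernelRKHS.k {X : Type*} (K : KernelRKHS X) (x y : X) : ℝ := ⟪K.φ x, K.φ y⟫_ℝ

/-- The kernel of `K` is continuous. -/
def KernelRKHS.ContinuousKernel {X : Type*} [TopologicalSpace X] (K : KernelRKHS X) : Prop :=
  Continuous fun p : X × X => K.k p.1 p.2

/-- `K` is universal: its kernel is continuous and its RKHS is dense in `C(X)` with respect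
to the supremum norm. -/
def KernelRKHS.Universal {X : Type*} [TopologicalSpace X] (K : KernelRKHS X) : Prop :=
  K.ContinuousKernel ∧
    ∀ g : C(X, ℝ), ∀ ε > (0 : ℝ), ∃ f : K.H, ∀ x, |g x - ⟪f, K.φ x⟫_ℝ| ≤ ε

/-- `K` is characteristic: the kernel mean embedding is injective on Borel probability
measures. -/
def KernelRKHS.Characteristic {X : Type*} [MeasurableSpace X] (K : KernelRKHS X) : Prop :=
  ∀ P Q : Measure X, IsProbabilityMeasure P → IsProbabilityMeasure Q →
    (∫ x, K.φ x ∂P) = (∫ x, K.φ x ∂Q) → P = Q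

namespace KernelRKHS

variable {X : Type*} [TopologicalSpace X]

theorem ContinuousKernel.continuous_φ {K : KernelRKHS X} (hK : K.ContinuousKernel) :
    Continuous K.φ := by
  rw [continuous_iff_continuousAt]
  intro y
  rw [ContinuousAt, tendsto_iff_norm_sub_tendsto_zero]
  have h1 : Continuous fun x => K.k x x := hK.comp (continuous_id.prodMk continuous_id)
  have h2 : Continuous fun x => K.k x y := hK.comp (continuous_id.prodMk continuous_const)
  have h : Continuous fun x => √(K.k x x - 2 * K.k x y + K.k y y) := by fun_prop
  have h' := h.tendsto y
  have h0 : √(K.k y y - 2 * K.k y y + K.k y y) = 0 := by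
    rw [show K.k y y - 2 * K.k y y + K.k y y = 0 by ring, Real.sqrt_zero]
  rw [h0] at h'
  refine h'.congr fun x => ?_
  rw [← Real.sqrt_sq (norm_nonneg (K.φ x - K.φ y)), norm_sub_sq_real]
  simp only [k, real_inner_self_eq_norm_sq]

theorem metrizableSpace [CompactSpace X] {K : KernelRKHS X} (hK : K.ContinuousKernel)
    (hinj : Function.Injective K.φ) : TopologicalSpace.MetrizableSpace X :=
  (hK.continuous_φ.isClosedEmbedding hinj).isEmbedding.metrizableSpace

theorem Universal.injective_φ [CompactSpace X] [T2Space X] {K : KernelRKHS X}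
    (hK : K.Universal) : Function.Injective K.φ := by
  intro x y hxy
  by_contra hne
  -- RKHS functions take equal values at `x` and `y`, so none is within `1/3` of a Urysohn function
  obtain ⟨g, hx, hy, -⟩ := exists_continuous_zero_one_of_isClosed (isClosed_singleton (x := x))
    (isClosed_singleton (x := y)) (by simpa using hne)
  obtain ⟨f, hf⟩ := hK.2 g (1 / 3) (by norm_num)
  have h1 := hf x
  have h2 := hf y
  rw [hx rfl, hxy] at h1
  rw [hy rfl] at h2
  rw [abs_le] at h1 h2
  simp only [Pi.zero_apply, Pi.one_apply] at h1 h2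
  linarith [h1.1, h2.2]

theorem Characteristic.injective_φ [T2Space X] [MeasurableSpace X] [BorelSpace X]
    {K : KernelRKHS X} (hK : K.Characteristic) : Function.Injective K.φ := by
  intro x y hxy
  refine dirac_eq_dirac_iff.1 (hK _ _ Measure.dirac.isProbabilityMeasure
    Measure.dirac.isProbabilityMeasure ?_)
  by_cases hc : CompleteSpace K.H
  · rw [integral_dirac, integral_dirac, hxy]
  · -- over an incomplete space both Bochner integrals are zero by convention
    rw [integral_of_not_completeSpace hc, integral_of_not_completeSpace hc]

/-- The mean embedding determines the integrals of all RKHS functions, which are uniformly dense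
in `C(X)`. Completeness is needed because the Bochner integral is zero in an incomplete space. -/
theorem Universal.characteristic [CompactSpace X] [HasOuterApproxClosed X]
    [MeasurableSpace X] [BorelSpace X] {K : KernelRKHS X} [CompleteSpace K.H]
    (hK : K.Universal) : K.Characteristic := by
  intro P Q hP hQ h
  have hint (μ : Measure X) [IsFiniteMeasure μ] : Integrable K.φ μ :=
    hK.1.continuous_φ.integrable_of_hasCompactSupport (HasCompactSupport.of_compactSpace _)
  have hinner (f : K.H) : ∫ x, ⟪f, K.φ x⟫_ℝ ∂P = ∫ x, ⟪f, K.φ x⟫_ℝ ∂Q := by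
    rw [integral_inner (hint P), integral_inner (hint Q), h]
  refine ext_of_forall_integral_eq_of_IsFiniteMeasure fun g => ?_
  -- approximate `g` uniformly by an element of the RKHS
  refine eq_of_forall_dist_le fun ε hε => ?_
  obtain ⟨f, hf⟩ := hK.2 g.toContinuousMap (ε / 2) (by positivity)
  have key (μ : Measure X) [IsProbabilityMeasure μ] :
      |∫ x, g x ∂μ - ∫ x, ⟪f, K.φ x⟫_ℝ ∂μ| ≤ ε / 2 := by
    rw [← integral_sub (g.integrable μ) ((hint μ).const_inner f)]
    have := norm_integral_le_of_norm_le_const (μ := μ)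
      (f := fun x => g x - ⟪f, K.φ x⟫_ℝ) (C := ε / 2) (Filter.Eventually.of_forall hf)
    simpa using this
  have h1 := key P
  have h2 := key Q
  rw [hinner] at h1
  rw [Real.dist_eq]
  rw [abs_le] at *
  constructor <;> linarith [h1.1, h1.2, h2.1, h2.2]

/-- The kernel with its RKHS obtained from a feature map into a Hilbert space, by restricting to
the closed span of the features. -/
def ofFeature {X H₀ : Type*} [NormedAddCommGroup H₀] [InnerProductSpace ℝ H₀]
    [CompleteSpace H₀] (ψ : X → H₀) : KernelRKHS X where
  H := (Submodule.span ℝ (Set.range ψ)).topologicalClosure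
  φ x := ⟨ψ x, Submodule.le_topologicalClosure _ (Submodule.subset_span ⟨x, rfl⟩)⟩
  dense := by
    rw [Submodule.topologicalClosure_eq_top_iff, Submodule.eq_bot_iff]
    intro v hv
    have h1 : (v : H₀) ∈ (Submodule.span ℝ (Set.range ψ)).topologicalClosureᗮ := by
      rw [Submodule.orthogonal_closure, Submodule.mem_orthogonal]
      intro u hu
      induction hu using Submodule.span_induction with
      | mem u hu =>
        obtain ⟨x, rfl⟩ := hu
        exact (Submodule.mem_orthogonal _ _).1 hv _ (Submodule.subset_span ⟨x, rfl⟩)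
      | zero => simp
      | add a b _ _ ha hb => rw [inner_add_left, ha, hb, add_zero]
      | smul c a _ ha => rw [inner_smul_left, ha, mul_zero]
    have h2 := (Submodule.mem_orthogonal _ _).1 h1 _ v.2
    exact Subtype.ext (inner_self_eq_zero.1 h2)

section ofFeature

variable {Y H₀ : Type*} [NormedAddCommGroup H₀] [InnerProductSpace ℝ H₀]
    [CompleteSpace H₀] (ψ : Y → H₀)

instance : CompleteSpace (ofFeature ψ).H :=
  (Submodule.isClosed_topologicalClosure _).completeSpace_coe

theorem ofFeature_k (x y : Y) : (ofFeature ψ).k x y = ⟪ψ x, ψ y⟫_ℝ := rfl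

/-- Every functional `⟪v, ψ ·⟫` on the ambient space is represented in the RKHS, namely by the
orthogonal projection of `v`. -/
theorem ofFeature_exists_inner (v : H₀) :
    ∃ f : (ofFeature ψ).H, ∀ x, ⟪f, (ofFeature ψ).φ x⟫_ℝ = ⟪v, ψ x⟫_ℝ := by
  let S := (Submodule.span ℝ (Set.range ψ)).topologicalClosure
  have : CompleteSpace S := (Submodule.isClosed_topologicalClosure _).completeSpace_coe
  exact ⟨S.orthogonalProjectionOnto v, fun x =>
    Submodule.inner_orthogonalProjectionOnto_eq_of_mem_right ((ofFeature ψ).φ x) v⟩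

end ofFeature

end KernelRKHS

/-- A compact metrizable space carries a universal kernel with complete RKHS. The index type
`ULift ℕ` places the RKHS in an arbitrary universe. -/
theorem exists_universal_complete.{u, v} (X : Type u) [TopologicalSpace X] [CompactSpace X]
    [TopologicalSpace.MetrizableSpace X] :
    ∃ K : KernelRKHS.{u, v} X, K.Universal ∧ CompleteSpace K.H := by
  classical
  let := TopologicalSpace.metrizableSpaceMetric X
  let F : ULift.{v} ℕ → C(X, ℝ) := fun n => TopologicalSpace.denseSeq C(X, ℝ) n.down
  -- the weights make the kernel series uniformly summable, dominated by `4⁻ⁿ`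
  let c : ULift.{v} ℕ → ℝ := fun n => (1 / 2) ^ n.down / (1 + ‖F n‖)
  have hc (n) : 0 < c n := by positivity
  have hb (n x) : |c n * F n x| ≤ (1 / 2 : ℝ) ^ n.down := by
    have h1 : |F n x| ≤ 1 + ‖F n‖ := ((F n).norm_coe_le_norm x).trans (by linarith)
    have h2 : 0 < 1 + ‖F n‖ := by positivity
    rw [abs_mul, abs_of_pos (hc n), div_mul_eq_mul_div, div_le_iff₀ h2]
    gcongr
  have hb' (n x y) : |(c n * F n x) * (c n * F n y)| ≤ (1 / 4 : ℝ) ^ n.down := by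
    rw [abs_mul, show (1 / 4 : ℝ) = 1 / 2 * (1 / 2) by norm_num, mul_pow]
    exact mul_le_mul (hb n x) (hb n y) (abs_nonneg _) (by positivity)
  have hs : Summable fun n : ULift.{v} ℕ => (1 / 4 : ℝ) ^ n.down :=
    (Equiv.ulift.summable_iff (f := fun n : ℕ => (1 / 4 : ℝ) ^ n)).2
      (summable_geometric_of_lt_one (by norm_num) (by norm_num))
  have hmem (x : X) : Memℓp (E := fun _ : ULift.{v} ℕ => ℝ) (fun n => c n * F n x) 2 := by
    refine memℓp_gen (hs.of_nonneg_of_le (fun n => by positivity) fun n => ?_)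
    have := hb' n x x
    rw [abs_mul, ← sq] at this
    simpa using this
  let ψ : X → lp (fun _ : ULift.{v} ℕ => ℝ) 2 := fun x => ⟨fun n => c n * F n x, hmem x⟩
  refine ⟨KernelRKHS.ofFeature ψ, ⟨?_, fun g ε hε => ?_⟩, inferInstance⟩
  · have : ∀ p : X × X, (KernelRKHS.ofFeature ψ).k p.1 p.2
        = ∑' n, (c n * F n p.2) * (c n * F n p.1) := fun p => rfl
    rw [KernelRKHS.ContinuousKernel, funext this]
    exact continuous_tsum (fun n => by fun_prop) hs fun n p => hb' n _ _
  · obtain ⟨m, hm⟩ := (TopologicalSpace.denseRange_denseSeq C(X, ℝ)).exists_dist_lt g hε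
    obtain ⟨f, hf⟩ := KernelRKHS.ofFeature_exists_inner ψ (lp.single 2 ⟨m⟩ (c ⟨m⟩)⁻¹)
    refine ⟨f, fun x => ?_⟩
    have hval : ⟪f, (KernelRKHS.ofFeature ψ).φ x⟫_ℝ = TopologicalSpace.denseSeq C(X, ℝ) m x := by
      rw [hf, lp.inner_single_left]
      change c ⟨m⟩ * F ⟨m⟩ x * (c ⟨m⟩)⁻¹ = F ⟨m⟩ x
      field_simp [(hc ⟨m⟩).ne']
    rw [hval, ← Real.dist_eq]
    exact (ContinuousMap.dist_apply_le_dist x).trans hm.le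

/-- **Theorem (existence of universal/characteristic kernels on compact spaces).** For a
compact Hausdorff space `(X,τ)` the following are equivalent: (i) there is a universal
kernel on `X`; (ii) there is a continuous characteristic kernel on `X`; (iii) `X` is
metrizable. If these hold, `X` is a compact Polish space and every finite signed Borel
measure on `X` is Radon. -/
theorem exists_universal_characteristic_iff_metrizable
    {X : Type*} [TopologicalSpace X] [CompactSpace X] [T2Space X]
    [MeasurableSpace X] [BorelSpace X] :
    ((∃ K : KernelRKHS X, K.Universal) ↔ TopologicalSpace.MetrizableSpace X) ∧
    ((∃ K : KernelRKHS X, K.ContinuousKernel ∧ K.Characteristic)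
      ↔ TopologicalSpace.MetrizableSpace X) ∧
    (TopologicalSpace.MetrizableSpace X →
      (PolishSpace X ∧ ∀ μ : SignedMeasure X, IsRadonSigned μ)) := by
  refine ⟨⟨fun ⟨K, hK⟩ => K.metrizableSpace hK.1 hK.injective_φ, fun _ => ?_⟩,
    ⟨fun ⟨K, hK, hc⟩ => K.metrizableSpace hK hc.injective_φ, fun _ => ?_⟩, fun _ => ?_⟩
  · obtain ⟨K, hK, -⟩ := exists_universal_complete X
    exact ⟨K, hK⟩
  · obtain ⟨K, hK, _⟩ := exists_universal_complete X
    let := TopologicalSpace.metrizableSpaceMetric X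
    exact ⟨K, hK.1, hK.characteristic⟩
  · let := TopologicalSpace.metrizableSpaceMetric X
    refine ⟨inferInstance, fun μ => ?_⟩
    exact ⟨μ.toJordanDecomposition.posPart, μ.toJordanDecomposition.negPart, inferInstance,
      inferInstance, inferInstance, inferInstance,
      μ.toSignedMeasure_toJordanDecomposition.symm⟩

end
end
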